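/- arXiv:math/0104199 — 5 statements merged into one kernel-verified Lean document; each statement's English description precedes it below -/
import Mathlib

section
/- Fix ε ∈ (0,1) and a sequence of positive constants (C_m)_{m∈ℕ}. For every N ∈ ℕ there exists a constant C > 0 such that the following holds for every integer j ≥ 1: if f : ℝ³ → ℂ is a Schwartz function whose Fourier transform is supported in the closed ball of radius 3·2^j about the origin, and φ : ℝ³ → ℂ is a smooth function whose support has diameter at most 1 and which satisfies sup_x ‖(iterated derivative of order m of φ)(x)‖ ≤ C_m · 2^{m·j(1−ε)} for every m ∈ ℕ, then the L² norm of the restriction of the Fourier transform of the product φ·f to the set {ξ ∈ ℝ³ : ‖ξ‖ > 4·2^j} is at most C · 2^{-Nj} · ‖f‖_{L²(ℝ³)}. -/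
open MeasureTheory SchwartzMap
open scoped FourierTransform

/-!
Let `R > 0`, let `k` be a Schwartz function of integral one with `𝓕 k` supported in the ball of
radius `R`, and suppose that `𝓕 f` is supported in the ball of radius `b`. The average `k ⋆ φ` is
band-limited to `‖ξ‖ ≤ R`, so `𝓕 ((k ⋆ φ) f)` vanishes for `‖ξ‖ > b + R`, and at these
frequencies `φ` may be replaced by `φ - k ⋆ φ`. By the mean value inequality
`‖φ - k ⋆ φ‖_∞ ≤ (∫ ‖y‖ ‖k y‖) ‖Dφ‖_∞`, where the moment is `c / R` when `k` is a rescaled fixed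
kernel. As `D` commutes with convolution, `M` replacements leave a multiplier bounded by
`(c / R) ^ M ‖D^M φ‖_∞`, and Plancherel turns this into an `L²` bound. For `R = 2 ^ j` and
`‖D^M φ‖_∞ ≲ R ^ (M (1 - ε))` it is `O(R ^ (-M ε))`, so it suffices to take `M ≥ N / ε`.
-/

open scoped Convolution ContDiff Pointwise RealInnerProductSpace
open Function Metric

section Multipliers

variable {E F G : Type*} [NormedAddCommGroup E] [NormedSpace ℝ E]
  [NormedAddCommGroup F] [NormedSpace ℝ F] [NormedAddCommGroup G] [NormedSpace ℝ G]
  {f g : E → F}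

/-- The space `C_b^∞` of smooth functions whose derivatives of all orders (including order `0`)
are bounded: the class of multipliers `φ` that is stable under convolution with integrable
kernels. -/
structure BoundedSmooth (g : E → F) : Prop where
  contDiff : ContDiff ℝ ∞ g
  bounded_iteratedFDeriv : ∀ m : ℕ, ∃ B : ℝ, ∀ x, ‖iteratedFDeriv ℝ m g x‖ ≤ B

namespace BoundedSmooth

lemma bounded (hg : BoundedSmooth g) : ∃ B : ℝ, ∀ x, ‖g x‖ ≤ B := by
  simpa only [norm_iteratedFDeriv_zero] using hg.bounded_iteratedFDeriv 0

lemma hasTemperateGrowth (hg : BoundedSmooth g) : g.HasTemperateGrowth := by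
  refine ⟨hg.contDiff, fun m => ?_⟩
  obtain ⟨B, hB⟩ := hg.bounded_iteratedFDeriv m
  exact ⟨0, B, fun x => by simpa only [pow_zero, mul_one] using hB x⟩

protected lemma fderiv (hg : BoundedSmooth g) : BoundedSmooth (fderiv ℝ g) := by
  refine ⟨hg.contDiff.fderiv_right le_rfl, fun m => ?_⟩
  simpa only [norm_iteratedFDeriv_fderiv] using hg.bounded_iteratedFDeriv (m + 1)

lemma linearIsometryEquiv_comp (hg : BoundedSmooth g) (A : F ≃ₗᵢ[ℝ] G) :
    BoundedSmooth (A ∘ g) := by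
  refine ⟨A.contDiff.comp hg.contDiff, fun m => ?_⟩
  simpa only [A.norm_iteratedFDeriv_comp_left] using hg.bounded_iteratedFDeriv m

protected lemma iteratedFDeriv (hg : BoundedSmooth g) (m : ℕ) :
    BoundedSmooth (iteratedFDeriv ℝ m g) := by
  induction m with
  | zero => exact hg.linearIsometryEquiv_comp (continuousMultilinearCurryFin0 ℝ E F).symm
  | succ m ih =>
    exact ih.fderiv.linearIsometryEquiv_comp
      (continuousMultilinearCurryLeftEquiv ℝ (fun _ : Fin (m + 1) => E) F).symm

protected lemma iteratedFDeriv_sub (hf : BoundedSmooth f) (hg : BoundedSmooth g) (m : ℕ) :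
    iteratedFDeriv ℝ m (f - g) = iteratedFDeriv ℝ m f - iteratedFDeriv ℝ m g :=
  iteratedFDeriv_sub (contDiff_infty.1 hf.contDiff m) (contDiff_infty.1 hg.contDiff m)

lemma sub (hf : BoundedSmooth f) (hg : BoundedSmooth g) : BoundedSmooth (f - g) := by
  refine ⟨hf.contDiff.sub hg.contDiff, fun m => ?_⟩
  obtain ⟨A, hA⟩ := hf.bounded_iteratedFDeriv m
  obtain ⟨B, hB⟩ := hg.bounded_iteratedFDeriv m
  refine ⟨A + B, fun x => ?_⟩
  rw [hf.iteratedFDeriv_sub hg]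
  exact norm_sub_le_of_le (hA x) (hB x)

end BoundedSmooth

end Multipliers

section Convolution

variable {𝕜 E F G : Type*} [RCLike 𝕜] [NormedAddCommGroup E] [MeasurableSpace E] {μ : Measure E}
  [NormedAddCommGroup F] [NormedSpace ℝ F] [NormedSpace 𝕜 F] [IsScalarTower ℝ 𝕜 F]
  [NormedAddCommGroup G] [NormedSpace ℝ G] [NormedSpace 𝕜 G] [IsScalarTower ℝ 𝕜 G]
  {k : E → 𝕜} {g : E → F} {B : ℝ}

lemma norm_convolution_le (hk : Integrable k μ) (hB : ∀ x, ‖g x‖ ≤ B) (x : E) :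
    ‖(k ⋆[.lsmul ℝ 𝕜, μ] g) x‖ ≤ (∫ y, ‖k y‖ ∂μ) * B := by
  rw [← integral_mul_const]
  refine norm_integral_le_of_norm_le (hk.norm.mul_const B) (.of_forall fun y => ?_)
  rw [ContinuousLinearMap.lsmul_apply, norm_smul]
  gcongr
  exact hB _

lemma convolution_lsmul_equiv_comp (A : F ≃L[ℝ] G) (hA : ∀ (c : 𝕜) (v : F), A (c • v) = c • A v) :
    k ⋆[.lsmul ℝ 𝕜, μ] (A ∘ g) = A ∘ (k ⋆[.lsmul ℝ 𝕜, μ] g) := by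
  ext x
  simp only [convolution_def, ContinuousLinearMap.lsmul_apply, Function.comp_apply, ← hA,
    A.integral_comp_comm]

variable [BorelSpace E] [SecondCountableTopology E]

lemma convolutionExistsAt_of_bounded (hk : Integrable k μ) (hg : Continuous g)
    (hB : ∀ x, ‖g x‖ ≤ B) (x : E) :
    ConvolutionExistsAt k g x (.lsmul ℝ 𝕜) μ :=
  hk.smul_bdd B (hg.comp (continuous_sub_left x)).aestronglyMeasurable (.of_forall fun _ => hB _)

variable [NormedSpace ℝ E]

lemma hasFDerivAt_convolution (hk : Integrable k μ) (hg : ContDiff ℝ 1 g)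
    (hgb : ∃ A : ℝ, ∀ x, ‖g x‖ ≤ A) (hgb' : ∃ B : ℝ, ∀ x, ‖fderiv ℝ g x‖ ≤ B) (x : E) :
    HasFDerivAt (k ⋆[.lsmul ℝ 𝕜, μ] g) ((k ⋆[.lsmul ℝ 𝕜, μ] fderiv ℝ g) x) x := by
  obtain ⟨A, hA⟩ := hgb
  obtain ⟨B, hB⟩ := hgb'
  have hint := convolutionExistsAt_of_bounded hk hg.continuous hA
  have hint' := convolutionExistsAt_of_bounded hk (hg.continuous_fderiv one_ne_zero) hB x
  refine hasFDerivAt_integral_of_dominated_of_fderiv_le (bound := fun y => ‖k y‖ * B)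
    (F := fun x y => k y • g (x - y)) (F' := fun x y => k y • fderiv ℝ g (x - y))
    Filter.univ_mem (.of_forall fun z => (hint z).1) (hint x) hint'.1
    (.of_forall fun y z _ => ?_) (hk.norm.mul_const B) (.of_forall fun y z _ => ?_)
  · rw [norm_smul]
    gcongr
    exact hB _
  · have hgd : HasFDerivAt g (fderiv ℝ g (z - y)) (z - y) :=
      (hg.differentiable one_ne_zero _).hasFDerivAt
    exact ((hasFDerivAt_comp_sub y).2 hgd).const_smul (k y)

protected lemma BoundedSmooth.hasFDerivAt_convolution (hk : Integrable k μ)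
    (hg : BoundedSmooth g) (x : E) :
    HasFDerivAt (k ⋆[.lsmul ℝ 𝕜, μ] g) ((k ⋆[.lsmul ℝ 𝕜, μ] fderiv ℝ g) x) x :=
  hasFDerivAt_convolution hk (hg.contDiff.of_le (by simp)) hg.bounded hg.fderiv.bounded x

lemma BoundedSmooth.fderiv_convolution (hk : Integrable k μ) (hg : BoundedSmooth g) :
    fderiv ℝ (k ⋆[.lsmul ℝ 𝕜, μ] g) = k ⋆[.lsmul ℝ 𝕜, μ] fderiv ℝ g :=
  funext fun x => (hg.hasFDerivAt_convolution hk x).fderiv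

lemma BoundedSmooth.iteratedFDeriv_convolution (hk : Integrable k μ) (hg : BoundedSmooth g)
    (m : ℕ) :
    iteratedFDeriv ℝ m (k ⋆[.lsmul ℝ 𝕜, μ] g) = k ⋆[.lsmul ℝ 𝕜, μ] iteratedFDeriv ℝ m g := by
  induction m with
  | zero =>
    let A := (continuousMultilinearCurryFin0 ℝ E F).symm.toContinuousLinearEquiv
    exact (convolution_lsmul_equiv_comp A fun _ _ => rfl).symm
  | succ m ih =>
    let A : (E →L[ℝ] E [×m]→L[ℝ] F) ≃L[ℝ] E [×(m + 1)]→L[ℝ] F :=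
      (continuousMultilinearCurryLeftEquiv ℝ (fun _ => E) F).symm.toContinuousLinearEquiv
    rw [iteratedFDeriv_succ_eq_comp_left, ih, (hg.iteratedFDeriv m).fderiv_convolution hk]
    have hA (c : 𝕜) (v) : A (c • v) = c • A v := rfl
    exact (convolution_lsmul_equiv_comp (F := E →L[ℝ] E [×m]→L[ℝ] F) (k := k) A hA).symm

lemma BoundedSmooth.convolution (hk : Integrable k μ) (hg : BoundedSmooth g) :
    BoundedSmooth (k ⋆[.lsmul ℝ 𝕜, μ] g) := by
  refine ⟨contDiff_of_differentiable_iteratedFDeriv fun m _ x => ?_, fun m => ?_⟩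
  · rw [hg.iteratedFDeriv_convolution hk]
    exact ((hg.iteratedFDeriv m).hasFDerivAt_convolution hk x).differentiableAt
  · obtain ⟨B, hB⟩ := hg.bounded_iteratedFDeriv m
    rw [hg.iteratedFDeriv_convolution hk]
    exact ⟨_, norm_convolution_le hk hB⟩

end Convolution

section HighPass

variable {𝕜 E F : Type*} [RCLike 𝕜] [NormedAddCommGroup E] [MeasurableSpace E] {μ : Measure E}
  [NormedAddCommGroup F] [NormedSpace ℝ F] [NormedSpace 𝕜 F]

/-- The operator `g ↦ g - k ⋆ g`: a high-pass filter when `k` has integral one and compactly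
supported Fourier transform, since it then alters low frequencies only. -/
noncomputable def highPass [IsScalarTower ℝ 𝕜 F] (μ : Measure E) (k : E → 𝕜) (g : E → F) : E → F :=
  g - k ⋆[.lsmul ℝ 𝕜, μ] g

variable [IsScalarTower ℝ 𝕜 F] [BorelSpace E] [SecondCountableTopology E]
  {k : E → 𝕜} {g : E → F} {B : ℝ}

lemma highPass_apply_eq_integral [CompleteSpace F] (hk : Integrable k μ) (hk1 : ∫ y, k y ∂μ = 1)
    (hg : Continuous g) (hgb : ∃ A : ℝ, ∀ x, ‖g x‖ ≤ A) (x : E) :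
    highPass μ k g x = ∫ y, k y • (g x - g (x - y)) ∂μ := by
  obtain ⟨A, hA⟩ := hgb
  have hconv : Integrable (fun y => k y • g (x - y)) μ :=
    convolutionExistsAt_of_bounded hk hg hA x
  simp only [smul_sub]
  rw [integral_sub (hk.smul_const _) hconv, integral_smul_const, hk1, one_smul]
  rfl

variable [NormedSpace ℝ E]

protected lemma BoundedSmooth.highPass (hk : Integrable k μ) (hg : BoundedSmooth g) :
    BoundedSmooth (highPass μ k g) :=
  hg.sub (hg.convolution hk)

lemma BoundedSmooth.iteratedFDeriv_highPass (hk : Integrable k μ) (hg : BoundedSmooth g) (m : ℕ) :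
    iteratedFDeriv ℝ m (highPass μ k g) =
      highPass μ k (iteratedFDeriv ℝ m g) := by
  rw [highPass, hg.iteratedFDeriv_sub (hg.convolution hk), hg.iteratedFDeriv_convolution hk,
    highPass]

lemma BoundedSmooth.iterate_highPass (hk : Integrable k μ) (hg : BoundedSmooth g) (M : ℕ) :
    BoundedSmooth ((highPass μ k)^[M] g) :=
  Function.Iterate.rec BoundedSmooth hg (fun _ h => h.highPass hk) M

variable [CompleteSpace F]

lemma norm_highPass_le (hk : Integrable k μ) (hk1 : ∫ y, k y ∂μ = 1)
    (hkm : Integrable (fun y => ‖y‖ * ‖k y‖) μ) (hg : Differentiable ℝ g)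
    (hgb : ∃ A : ℝ, ∀ x, ‖g x‖ ≤ A) (hB : ∀ x, ‖fderiv ℝ g x‖ ≤ B) (x : E) :
    ‖highPass μ k g x‖ ≤ (∫ y, ‖y‖ * ‖k y‖ ∂μ) * B := by
  rw [highPass_apply_eq_integral hk hk1 hg.continuous hgb, ← integral_mul_const]
  refine norm_integral_le_of_norm_le (hkm.mul_const B) (.of_forall fun y => ?_)
  have hmean : ‖g x - g (x - y)‖ ≤ B * ‖y‖ := by
    simpa only [sub_sub_cancel] using convex_univ.norm_image_sub_le_of_norm_fderiv_le
      (fun z _ => hg z) (fun z _ => hB z) (Set.mem_univ (x - y)) (Set.mem_univ x)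
  calc ‖k y • (g x - g (x - y))‖ ≤ ‖k y‖ * (B * ‖y‖) := by rw [norm_smul]; gcongr
    _ = ‖y‖ * ‖k y‖ * B := by ring

lemma BoundedSmooth.norm_iteratedFDeriv_highPass_le (hk : Integrable k μ) (hk1 : ∫ y, k y ∂μ = 1)
    (hkm : Integrable (fun y => ‖y‖ * ‖k y‖) μ) (hg : BoundedSmooth g) {m : ℕ}
    (hB : ∀ x, ‖iteratedFDeriv ℝ (m + 1) g x‖ ≤ B) (x : E) :
    ‖iteratedFDeriv ℝ m (highPass μ k g) x‖ ≤ (∫ y, ‖y‖ * ‖k y‖ ∂μ) * B := by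
  rw [hg.iteratedFDeriv_highPass hk]
  have hDg := hg.iteratedFDeriv m
  exact norm_highPass_le hk hk1 hkm (hDg.contDiff.differentiable (by simp)) hDg.bounded
    (by simpa only [norm_fderiv_iteratedFDeriv] using hB) x

lemma BoundedSmooth.norm_iterate_highPass_le (hk : Integrable k μ) (hk1 : ∫ y, k y ∂μ = 1)
    (hkm : Integrable (fun y => ‖y‖ * ‖k y‖) μ) (hg : BoundedSmooth g) (M : ℕ)
    (hB : ∀ x, ‖iteratedFDeriv ℝ M g x‖ ≤ B) (x : E) :
    ‖(highPass μ k)^[M] g x‖ ≤ (∫ y, ‖y‖ * ‖k y‖ ∂μ) ^ M * B := by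
  induction M generalizing g B with
  | zero => simpa using hB x
  | succ M ih =>
    rw [Function.iterate_succ_apply, pow_succ, mul_assoc]
    exact ih (hg.highPass hk) (hg.norm_iteratedFDeriv_highPass_le hk hk1 hkm hB)

end HighPass

section Fubini

variable {𝕜 G V : Type*} [RCLike 𝕜] [NormedAddCommGroup G] [MeasurableSpace G] [BorelSpace G]
  [SecondCountableTopology G] {μ : Measure G} [SFinite μ]
  [μ.IsAddLeftInvariant] [μ.IsNegInvariant]
  [NormedAddCommGroup V] [NormedSpace 𝕜 V] {k h : G → 𝕜} {F : G → V}

lemma integrable_prod_comp_sub_smul (hk : Integrable k μ) (hF : Integrable F μ) :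
    Integrable (fun p : G × G => k (p.1 - p.2) • F p.1) (μ.prod μ) := by
  have hswapped := hF.convolution_integrand (ContinuousLinearMap.lsmul 𝕜 𝕜).flip hk.comp_neg
  simpa [comp_def] using hswapped.swap

variable [NormedSpace ℝ V]

lemma integral_convolution_smul [CompleteSpace V] (hk : Integrable k μ) (hF : Integrable F μ)
    (hh : AEStronglyMeasurable h μ) (hhb : ∃ A : ℝ, ∀ x, ‖h x‖ ≤ A) :
    ∫ x, (k ⋆[.lsmul ℝ 𝕜, μ] h) x • F x ∂μ = ∫ z, h z • ∫ x, k (x - z) • F x ∂μ ∂μ := by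
  obtain ⟨A, hA⟩ := hhb
  have hint : Integrable (uncurry fun x z => h z • k (x - z) • F x) (μ.prod μ) :=
    (integrable_prod_comp_sub_smul hk hF).bdd_smul A hh.comp_snd (.of_forall fun p => hA p.2)
  calc ∫ x, (k ⋆[.lsmul ℝ 𝕜, μ] h) x • F x ∂μ
      = ∫ x, ∫ z, h z • k (x - z) • F x ∂μ ∂μ := by
        simp only [convolution_eq_swap (𝕜 := ℝ), ContinuousLinearMap.lsmul_apply, smul_smul,
          ← integral_smul_const, smul_eq_mul, mul_comm]
    _ = ∫ z, ∫ x, h z • k (x - z) • F x ∂μ ∂μ := integral_integral_swap hint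
    _ = ∫ z, h z • ∫ x, k (x - z) • F x ∂μ ∂μ := by simp only [integral_smul]

end Fubini

section FourierSupport

variable {E V : Type*} [NormedAddCommGroup E] [InnerProductSpace ℝ E] [FiniteDimensional ℝ E]
  [MeasurableSpace E] [BorelSpace E] [NormedAddCommGroup V] [NormedSpace ℂ V]

lemma support_fourierInv (g : E → V) : support (𝓕⁻ g) = -support (𝓕 g) := by
  ext ξ
  rw [Set.mem_neg, mem_support, mem_support, Real.fourierInv_eq_fourier_neg]

lemma support_fourier_comp_sub (g : E → V) (z : E) :
    support (𝓕 fun x => g (x - z)) = support (𝓕 g) := by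
  have hshift : (fun x => g (x - z)) = g ∘ fun x => x + -z := by
    simp only [comp_def, sub_eq_add_neg]
  ext ξ
  have h := congrFun (VectorFourier.fourierIntegral_comp_add_right Real.fourierChar volume
    (innerₗ E) g (-z)) ξ
  rw [← hshift] at h
  change 𝓕 (fun x => g (x - z)) ξ = _ • 𝓕 g ξ at h
  rw [mem_support, mem_support, h, smul_ne_zero_iff_ne]

variable [CompleteSpace V]

lemma fourier_convolution_smul {k h : E → ℂ} {f : E → V} (hk : Integrable k) (hf : Integrable f)
    (hh : AEStronglyMeasurable h) (hhb : ∃ A : ℝ, ∀ x, ‖h x‖ ≤ A) (ξ : E) :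
    𝓕 (fun x => (k ⋆[.lsmul ℝ ℂ, volume] h) x • f x) ξ =
      ∫ z, h z • 𝓕 (fun x => k (x - z) • f x) ξ := by
  have hmod : Integrable fun x => Real.fourierChar (-⟪x, ξ⟫) • f x :=
    (Real.fourierIntegral_convergent_iff ξ).2 hf
  simpa only [Real.fourier_eq, smul_comm (Real.fourierChar _)] using
    integral_convolution_smul hk hmod hh hhb

lemma support_fourier_smul_subset (k : 𝓢(E, ℂ)) (f : 𝓢(E, V)) :
    support (𝓕 fun x => k x • f x) ⊆ support (𝓕 (k : E → ℂ)) + support (𝓕 (f : E → V)) := by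
  let B : ℂ →L[ℂ] V →L[ℂ] V := .lsmul ℂ ℂ
  have hconv : 𝓕⁻ (pairing B k f) = SchwartzMap.convolution B (𝓕⁻ k) (𝓕⁻ f) := by
    simp [SchwartzMap.convolution]
  have hinv : 𝓕⁻ (fun x => k x • f x) = 𝓕⁻ (k : E → ℂ) ⋆[B, volume] 𝓕⁻ (f : E → V) := by
    rw [← fourierInv_coe, ← fourierInv_coe]
    funext ξ
    rw [← convolution_apply, ← hconv, fourierInv_coe]
    rfl
  have hsub : support (𝓕⁻ (k : E → ℂ) ⋆[B, volume] 𝓕⁻ (f : E → V)) ⊆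
      support (𝓕⁻ (k : E → ℂ)) + support (𝓕⁻ (f : E → V)) := support_convolution_subset B
  rwa [← hinv, support_fourierInv, support_fourierInv, support_fourierInv, ← neg_add,
    Set.neg_subset_neg] at hsub

lemma support_fourier_convolution_smul_subset (k : 𝓢(E, ℂ)) (f : 𝓢(E, V)) {h : E → ℂ}
    (hh : AEStronglyMeasurable h) (hhb : ∃ A : ℝ, ∀ x, ‖h x‖ ≤ A) :
    support (𝓕 fun x => (k ⋆[.lsmul ℝ ℂ, volume] h) x • f x) ⊆
      support (𝓕 (k : E → ℂ)) + support (𝓕 (f : E → V)) := by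
  intro ξ
  contrapose!
  intro hξ
  have hslice (z : E) : 𝓕 (fun x => k (x - z) • f x) ξ = 0 := by
    have hz := support_fourier_smul_subset (compSubConstCLM ℂ z k) f
    rw [show ⇑(compSubConstCLM ℂ z k) = fun x => k (x - z) from rfl,
      support_fourier_comp_sub] at hz
    exact notMem_support.1 fun h => hξ (hz h)
  rw [notMem_support, fourier_convolution_smul k.integrable f.integrable hh hhb]
  simp only [hslice, smul_zero, integral_zero]

lemma fourier_highPass_smul (k : 𝓢(E, ℂ)) (f : 𝓢(E, V)) {h : E → ℂ} (hh : BoundedSmooth h)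
    {ξ : E} (hξ : ξ ∉ support (𝓕 (k : E → ℂ)) + support (𝓕 (f : E → V))) :
    𝓕 (fun x => highPass volume k h x • f x) ξ = 𝓕 (fun x => h x • f x) ξ := by
  have hint {u : E → ℂ} (hu : BoundedSmooth u) : Integrable fun x => u x • f x := by
    obtain ⟨A, hA⟩ := hu.bounded
    exact f.integrable.bdd_smul A hu.contDiff.continuous.aestronglyMeasurable (.of_forall hA)
  have hlow : 𝓕 (fun x => (k ⋆[.lsmul ℝ ℂ, volume] h) x • f x) ξ = 0 :=
    notMem_support.1 fun h' => hξ (support_fourier_convolution_smul_subset k f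
      hh.contDiff.continuous.aestronglyMeasurable hh.bounded h')
  rw [Real.fourier_eq] at hlow
  rw [Real.fourier_eq, Real.fourier_eq, ← sub_zero (∫ x, _ • h x • f x), ← hlow, ← integral_sub
    ((Real.fourierIntegral_convergent_iff ξ).2 (hint hh))
    ((Real.fourierIntegral_convergent_iff ξ).2 (hint (hh.convolution k.integrable)))]
  exact integral_congr_ae (.of_forall fun x => by
    simp only [highPass, Pi.sub_apply, sub_smul, smul_sub])

lemma fourier_iterate_highPass_smul (k : 𝓢(E, ℂ)) (f : 𝓢(E, V)) {h : E → ℂ} (hh : BoundedSmooth h)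
    {ξ : E} (hξ : ξ ∉ support (𝓕 (k : E → ℂ)) + support (𝓕 (f : E → V))) (M : ℕ) :
    𝓕 (fun x => (highPass volume k)^[M] h x • f x) ξ = 𝓕 (fun x => h x • f x) ξ := by
  induction M with
  | zero => rfl
  | succ M ih =>
    simp only [iterate_succ_apply']
    rw [fourier_highPass_smul k f (hh.iterate_highPass k.integrable M) hξ, ih]

end FourierSupport

section Plancherel

variable {E H : Type*} [NormedAddCommGroup E] [InnerProductSpace ℝ E] [FiniteDimensional ℝ E]
  [MeasurableSpace E] [BorelSpace E] [NormedAddCommGroup H] [InnerProductSpace ℂ H]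
  [CompleteSpace H]

lemma eLpNorm_fourier_eq (f : 𝓢(E, H)) :
    eLpNorm (𝓕 (f : E → H)) 2 volume = eLpNorm (f : E → H) 2 volume := by
  have h := norm_fourier_toL2_eq f
  rwa [norm_toLp, norm_toLp, ENNReal.toReal_eq_toReal_iff' (eLpNorm_lt_top _ _ _).ne
    (eLpNorm_lt_top _ _ _).ne, fourier_coe] at h

lemma eLpNorm_fourier_smul_le {u : E → ℂ} (hu : u.HasTemperateGrowth) {B : ℝ}
    (hB : ∀ x, ‖u x‖ ≤ B) (f : 𝓢(E, H)) :
    eLpNorm (𝓕 fun x => u x • f x) 2 volume ≤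
      ENNReal.ofReal B * eLpNorm (f : E → H) 2 volume := by
  rw [← smulLeftCLM_apply hu, eLpNorm_fourier_eq, smulLeftCLM_apply hu]
  refine eLpNorm_le_mul_eLpNorm_of_ae_le_mul (.of_forall fun x => ?_) 2
  rw [norm_smul]
  gcongr
  exact hB x

end Plancherel

section Kernel

variable {E V : Type*} [NormedAddCommGroup E] [InnerProductSpace ℝ E] [FiniteDimensional ℝ E]
  [MeasurableSpace E] [BorelSpace E] [NormedAddCommGroup V]

lemma integral_pow_finrank_smul_comp_smul [NormedSpace ℝ V] {R : ℝ} (hR : 0 < R) (g : E → V) :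
    ∫ x, R ^ Module.finrank ℝ E • g (R • x) = ∫ x, g x := by
  rw [integral_smul, Measure.integral_comp_smul_of_nonneg volume g R (hR := hR.le),
    smul_inv_smul₀ (pow_pos hR _).ne']

lemma fourier_pow_finrank_smul_comp_smul [NormedSpace ℂ V] {R : ℝ} (hR : 0 < R) (g : E → V)
    (ξ : E) : 𝓕 (fun x => R ^ Module.finrank ℝ E • g (R • x)) ξ = 𝓕 g (R⁻¹ • ξ) := by
  rw [Real.fourier_eq, Real.fourier_eq, ← integral_pow_finrank_smul_comp_smul hR fun _ => _ • g _]
  simp only [real_inner_smul_left, real_inner_smul_right, inv_mul_cancel_left₀ hR.ne',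
    smul_comm (Real.fourierChar _)]

lemma exists_schwartz_integral_eq_one_support_fourier_subset :
    ∃ k : 𝓢(E, ℂ), ∫ y, k y = 1 ∧ support (𝓕 (k : E → ℂ)) ⊆ closedBall 0 1 := by
  let b : ContDiffBump (0 : E) := ⟨1 / 2, 1, by norm_num, by norm_num⟩
  have hsupp : HasCompactSupport fun x : E => (b x : ℂ) :=
    b.hasCompactSupport.comp_left (g := fun t : ℝ => (t : ℂ)) Complex.ofReal_zero
  let β : 𝓢(E, ℂ) := hsupp.toSchwartzMap (Complex.ofRealCLM.contDiff.comp b.contDiff)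
  have hβ (ξ : E) : 𝓕 ((𝓕⁻ β : 𝓢(E, ℂ)) : E → ℂ) ξ = b ξ := by
    rw [← fourier_coe, FourierTransform.fourier_fourierInv_eq]
    rfl
  refine ⟨𝓕⁻ β, ?_, fun ξ hξ => ?_⟩
  · have h0 := hβ 0
    rw [b.one_of_mem_closedBall (mem_closedBall_self b.rIn_pos.le), Real.fourier_eq] at h0
    simpa only [inner_zero_right, neg_zero, AddChar.map_zero_eq_one, one_smul,
      Complex.ofReal_one] using h0
  · rw [mem_support, hβ, Complex.ofReal_ne_zero, ← mem_support, b.support_eq] at hξ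
    exact ball_subset_closedBall hξ

lemma exists_schwartz_integral_eq_one_integral_norm_mul_eq_div :
    ∃ c : ℝ, 0 ≤ c ∧ ∀ R : ℝ, 0 < R → ∃ k : 𝓢(E, ℂ), ∫ y, k y = 1 ∧
      support (𝓕 (k : E → ℂ)) ⊆ closedBall 0 R ∧ ∫ y, ‖y‖ * ‖k y‖ = c / R := by
  obtain ⟨k, hk1, hk⟩ := exists_schwartz_integral_eq_one_support_fourier_subset (E := E)
  refine ⟨∫ y, ‖y‖ * ‖k y‖, integral_nonneg fun y => by positivity, fun R hR => ?_⟩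
  let kR : 𝓢(E, ℂ) := R ^ Module.finrank ℝ E • compCLMOfContinuousLinearEquiv ℝ
    (ContinuousLinearEquiv.smulLeft (Units.mk0 R hR.ne')) k
  have hkR : ⇑kR = fun y => R ^ Module.finrank ℝ E • k (R • y) := rfl
  refine ⟨kR, ?_, fun ξ hξ => ?_, ?_⟩
  · rw [hkR, integral_pow_finrank_smul_comp_smul hR, hk1]
  · rw [mem_support, hkR, fourier_pow_finrank_smul_comp_smul hR, ← mem_support] at hξ
    have hξ' := mem_closedBall_zero_iff.1 (hk hξ)
    rw [norm_smul, norm_inv, Real.norm_of_nonneg hR.le, inv_mul_le_one₀ hR] at hξ'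
    exact mem_closedBall_zero_iff.2 hξ'
  · rw [← integral_pow_finrank_smul_comp_smul hR fun y => ‖y‖ * ‖k y‖, ← integral_div]
    congr with y
    rw [hkR, norm_smul, norm_smul, norm_pow, Real.norm_of_nonneg hR.le, smul_eq_mul]
    field_simp

end Kernel

section HighFrequency

variable {E H : Type*} [NormedAddCommGroup E] [InnerProductSpace ℝ E] [FiniteDimensional ℝ E]
  [MeasurableSpace E] [BorelSpace E] [NormedAddCommGroup H] [InnerProductSpace ℂ H]
  [CompleteSpace H]

theorem exists_eLpNorm_fourier_smul_restrict_le :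
    ∃ c : ℝ, 0 ≤ c ∧ ∀ (f : 𝓢(E, H)) (φ : E → ℂ) (b R r B : ℝ) (M : ℕ), 0 < R → b + R ≤ r →
      support (𝓕 (f : E → H)) ⊆ closedBall 0 b → BoundedSmooth φ →
      (∀ x, ‖iteratedFDeriv ℝ M φ x‖ ≤ B) →
      eLpNorm (𝓕 fun x => φ x • f x) 2 (volume.restrict {ξ | r < ‖ξ‖}) ≤
        ENNReal.ofReal ((c / R) ^ M * B) * eLpNorm (f : E → H) 2 volume := by
  obtain ⟨c, hc, hkernel⟩ := exists_schwartz_integral_eq_one_integral_norm_mul_eq_div (E := E)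
  refine ⟨c, hc, fun f φ b R r B M hR hr hf hφ hB => ?_⟩
  obtain ⟨k, hk1, hkR, hkm⟩ := hkernel R hR
  let ψ := (highPass volume k)^[M] φ
  have hψ : ∀ x, ‖ψ x‖ ≤ (c / R) ^ M * B := by
    rw [← hkm]
    exact hφ.norm_iterate_highPass_le k.integrable hk1
      (by simpa only [pow_one] using k.integrable_pow_mul volume 1) M hB
  have hfourier (ξ : E) (hξ : r < ‖ξ‖) :
      𝓕 (fun x => φ x • f x) ξ = 𝓕 (fun x => ψ x • f x) ξ := by
    refine (fourier_iterate_highPass_smul k f hφ ?_ M).symm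
    rintro ⟨η, hη, ζ, hζ, rfl⟩
    have h := norm_add_le_of_le (mem_closedBall_zero_iff.1 (hkR hη))
      (mem_closedBall_zero_iff.1 (hf hζ))
    linarith
  have hS : MeasurableSet {ξ : E | r < ‖ξ‖} := measurableSet_lt measurable_const measurable_norm
  calc eLpNorm (𝓕 fun x => φ x • f x) 2 (volume.restrict {ξ | r < ‖ξ‖})
      = eLpNorm (𝓕 fun x => ψ x • f x) 2 (volume.restrict {ξ | r < ‖ξ‖}) :=
        eLpNorm_congr_ae ((ae_restrict_mem hS).mono hfourier)
    _ ≤ eLpNorm (𝓕 fun x => ψ x • f x) 2 volume := eLpNorm_mono_measure _ Measure.restrict_le_self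
    _ ≤ ENNReal.ofReal ((c / R) ^ M * B) * eLpNorm (f : E → H) 2 volume :=
        eLpNorm_fourier_smul_le (hφ.iterate_highPass k.integrable M).hasTemperateGrowth hψ f

lemma div_pow_mul_mul_rpow_le {c A R ε : ℝ} (hc : 0 ≤ c) (hR : 1 ≤ R) {M N : ℕ}
    (hM : N ≤ M * ε) :
    (c / R) ^ M * (A * R ^ (M * (1 - ε))) ≤ c ^ M * |A| * R ^ (-N : ℝ) := by
  have hpow : R⁻¹ ^ M * R ^ (M * (1 - ε)) ≤ R ^ (-N : ℝ) := by
    rw [← Real.rpow_natCast, Real.inv_rpow (by positivity), ← Real.rpow_neg (by positivity),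
      ← Real.rpow_add (by positivity)]
    exact Real.rpow_le_rpow_of_exponent_le hR (by linarith)
  calc (c / R) ^ M * (A * R ^ (M * (1 - ε)))
      = c ^ M * A * (R⁻¹ ^ M * R ^ (M * (1 - ε))) := by ring
    _ ≤ c ^ M * |A| * R ^ (-N : ℝ) := by
      gcongr
      exact le_abs_self A

theorem stmt4_general {ε : ℝ} (hε : 0 < ε) (Cm : ℕ → ℝ) (N : ℕ) :
    ∃ C : ℝ, 0 < C ∧ ∀ a : ℝ, 1 ≤ a → ∀ (j : ℕ) (b r : ℝ), b + a ^ j ≤ r →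
      ∀ (f : 𝓢(E, H)) (φ : E → ℂ), support (𝓕 (f : E → H)) ⊆ closedBall 0 b → ContDiff ℝ ∞ φ →
        (∀ (m : ℕ) (x : E), ‖iteratedFDeriv ℝ m φ x‖ ≤ Cm m * a ^ ((m : ℝ) * j * (1 - ε))) →
        (eLpNorm (𝓕 fun x => φ x • f x) 2 (volume.restrict {ξ | r < ‖ξ‖})).toReal ≤
          C * a ^ (-(N : ℝ) * j) * (eLpNorm (f : E → H) 2 volume).toReal := by
  obtain ⟨c, hc, hbound⟩ := exists_eLpNorm_fourier_smul_restrict_le (E := E) (H := H)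
  obtain ⟨M, hM⟩ := exists_nat_ge (N / ε)
  refine ⟨c ^ M * |Cm M| + 1, by positivity, fun a ha j b r hr f φ hf hφ hder => ?_⟩
  have hpow (t : ℝ) : a ^ (t * j) = (a ^ j) ^ t := by
    rw [mul_comm, Real.rpow_mul (by positivity), Real.rpow_natCast]
  have hderM (x : E) : ‖iteratedFDeriv ℝ M φ x‖ ≤ Cm M * (a ^ j) ^ (M * (1 - ε)) := by
    rw [← hpow, mul_right_comm]
    exact hder M x
  have hcoeff : (c / a ^ j) ^ M * (Cm M * (a ^ j) ^ (M * (1 - ε))) ≤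
      (c ^ M * |Cm M| + 1) * a ^ (-(N : ℝ) * j) := by
    rw [hpow]
    refine (div_pow_mul_mul_rpow_le hc (one_le_pow₀ ha) ((div_le_iff₀ hε).1 hM)).trans ?_
    gcongr
    exact le_add_of_nonneg_right zero_le_one
  have hle := (hbound f φ b (a ^ j) r _ M (by positivity) hr hf
    ⟨hφ, fun m => ⟨_, hder m⟩⟩ hderM).trans
    (mul_le_mul_left (ENNReal.ofReal_le_ofReal hcoeff) _)
  have hreal := ENNReal.toReal_mono
    (ENNReal.mul_ne_top ENNReal.ofReal_ne_top (f.eLpNorm_lt_top 2 volume).ne) hle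
  rwa [ENNReal.toReal_mul, ENNReal.toReal_ofReal (by positivity)] at hreal

end HighFrequency

/-- frequency localization of a spatially localized, frequency localized function.
If `𝓕 f` is supported in the ball of radius `3·2^j` and `φ` is a smooth function of "type j"
(support of diameter at most 1 and `m`-th derivatives bounded by `C_m 2^{m j (1-ε)}`), then
the part of `𝓕(φ f)` living at frequencies `‖ξ‖ > 4·2^j` is negligible:
its `L²` norm is at most `C 2^{-Nj} ‖f‖_{L²}`. -/
theorem stmt4 (ε : ℝ) (hε : 0 < ε) (hε1 : ε < 1) (Cm : ℕ → ℝ) (hCm : ∀ m, 0 < Cm m) :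
    ∀ N : ℕ, ∃ C : ℝ, 0 < C ∧
      ∀ (j : ℕ), 1 ≤ j →
        ∀ (f : 𝓢(EuclideanSpace ℝ (Fin 3), ℂ)) (φ : EuclideanSpace ℝ (Fin 3) → ℂ),
          Function.support (𝓕 (f : EuclideanSpace ℝ (Fin 3) → ℂ)) ⊆
            Metric.closedBall 0 (3 * 2 ^ j) →
          ContDiff ℝ (⊤ : ℕ∞) φ →
          Metric.diam (Function.support φ) ≤ 1 →
          (∀ (m : ℕ) (x : EuclideanSpace ℝ (Fin 3)),
            ‖iteratedFDeriv ℝ m φ x‖ ≤ Cm m * 2 ^ ((m : ℝ) * (j : ℝ) * (1 - ε))) →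
          (eLpNorm (𝓕 (fun x => φ x * f x)) 2
              (volume.restrict {ξ : EuclideanSpace ℝ (Fin 3) | 4 * 2 ^ j < ‖ξ‖})).toReal ≤
            C * 2 ^ (-(N : ℝ) * (j : ℝ)) *
              (eLpNorm (f : EuclideanSpace ℝ (Fin 3) → ℂ) 2 volume).toReal := by
  intro N
  obtain ⟨C, hC, h⟩ := stmt4_general (E := EuclideanSpace ℝ (Fin 3)) (H := ℂ) hε Cm N
  exact ⟨C, hC, fun j _ f φ hf hφ _ => h 2 one_le_two j _ _ (by linarith) f φ hf hφ⟩
end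

section
/- Fix ε ∈ (0,1) and a sequence of positive constants (C_m)_{m∈ℕ}. For every N ∈ ℕ there exists a constant C > 0 such that the following holds for every integer j ≥ 1: if f : ℝ³ → ℂ is a Schwartz function whose Fourier transform is supported in the closed ball of radius 3·2^j about the origin, and φ : ℝ³ → ℂ is a smooth function whose support has diameter at most 1 and which satisfies sup_x ‖(iterated derivative of order m of φ)(x)‖ ≤ C_m · 2^{m·j(1−ε)} for every m ∈ ℕ, then sup_{x∈ℝ³} |φ(x)f(x)| ≤ C · ( 2^{3j/2} · ‖φ·f‖_{L²(ℝ³)} + 2^{-Nj} · ‖f‖_{L²(ℝ³)} ). -/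
open MeasureTheory SchwartzMap
open scoped FourierTransform

/-!
Fix `x₀` and a Schwartz function `χ` with `χ 0 = 1` and `‖χ‖ ≤ 1`. Then `φ x₀ • f x₀ = u x₀ • f x₀`
for the Schwartz function `u = χ (· - x₀) φ`, hence `‖φ x₀ • f x₀‖ ≤ ‖𝓕⁻ (u • f)‖_{L¹}`. Let `𝓕⁻ f`
be supported in the ball of radius `r ∼ L`. The frequencies `‖ξ‖ ≤ 2 r` contribute at most a
constant times `r ^ (d / 2) ‖u • f‖_{L²}`, by Cauchy–Schwarz and Plancherel. For `‖ξ‖ ≥ 2 r` the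
convolution `𝓕⁻ (u • f) = 𝓕⁻ u ⋆ 𝓕⁻ f` only sees `𝓕⁻ u` at frequencies at least `‖ξ‖ / 2`. There
integration by parts gains a factor `L⁻¹` per derivative and loses only `L ^ δ` with `δ < 1`, so
enough derivatives beat any power of `L`.
-/

open Metric Function
open Module (finrank)
open scoped Convolution ENNReal

section MeasureEstimates

lemma setIntegral_norm_le_measureReal_rpow_mul_eLpNorm {α E : Type*} [MeasurableSpace α]
    [NormedAddCommGroup E] {μ : Measure α} {s : Set α} {h : α → E} (hs : μ s ≠ ∞)
    (hh : MemLp h 2 μ) :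
    ∫ x in s, ‖h x‖ ∂μ ≤ μ.real s ^ (1 / 2 : ℝ) * (eLpNorm h 2 μ).toReal := by
  have hL1 : eLpNorm h 1 (μ.restrict s) ≤ μ s ^ (1 / 2 : ℝ) * eLpNorm h 2 μ :=
    calc eLpNorm h 1 (μ.restrict s)
        ≤ eLpNorm h 2 (μ.restrict s) * μ s ^ (1 / 2 : ℝ) := by
          convert eLpNorm_le_eLpNorm_mul_rpow_measure_univ (p := 1) (q := 2) (by norm_num)
            hh.aestronglyMeasurable.restrict using 2
          norm_num
      _ ≤ μ s ^ (1 / 2 : ℝ) * eLpNorm h 2 μ := by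
          rw [mul_comm]
          gcongr
          exact Measure.restrict_le_self
  have hfin : μ s ^ (1 / 2 : ℝ) * eLpNorm h 2 μ ≠ ∞ :=
    ENNReal.mul_ne_top (ENNReal.rpow_ne_top_of_nonneg (by norm_num) hs) hh.eLpNorm_ne_top
  calc ∫ x in s, ‖h x‖ ∂μ = (eLpNorm h 1 (μ.restrict s)).toReal := by
        rw [eLpNorm_one_eq_lintegral_enorm,
          integral_norm_eq_lintegral_enorm hh.aestronglyMeasurable.restrict]
    _ ≤ (μ s ^ (1 / 2 : ℝ) * eLpNorm h 2 μ).toReal := ENNReal.toReal_mono hfin hL1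
    _ = μ.real s ^ (1 / 2 : ℝ) * (eLpNorm h 2 μ).toReal := by
        rw [ENNReal.toReal_mul, ← ENNReal.toReal_rpow, Measure.real]

variable {V E : Type*} [NormedAddCommGroup V] [NormedSpace ℝ V] [FiniteDimensional ℝ V]
  [MeasurableSpace V] [BorelSpace V] {μ : Measure V} [μ.IsAddHaarMeasure] [NormedAddCommGroup E]

lemma setIntegral_closedBall_norm_le_eLpNorm {h : V → E} (hh : MemLp h 2 μ) {r : ℝ} (hr : 0 ≤ r) :
    ∫ x in closedBall 0 r, ‖h x‖ ∂μ ≤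
      μ.real (ball 0 1) ^ (1 / 2 : ℝ) * r ^ (finrank ℝ V / 2 : ℝ) * (eLpNorm h 2 μ).toReal := by
  refine (setIntegral_norm_le_measureReal_rpow_mul_eLpNorm measure_closedBall_lt_top.ne hh).trans_eq
    ?_
  rw [Measure.addHaar_real_closedBall μ 0 hr, Real.mul_rpow (by positivity) (by positivity),
    ← Real.rpow_natCast_mul hr, mul_one_div, mul_comm (r ^ _)]

lemma setIntegral_compl_closedBall_norm_le_of_pow_mul_norm_le {h : V → E} {r M : ℝ} {p : ℕ}
    (hr : 1 ≤ r) (hM : 0 ≤ M)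
    (hdecay : ∀ x, r ≤ ‖x‖ → ‖x‖ ^ (p + (finrank ℝ V + 1)) * ‖h x‖ ≤ M) :
    ∫ x in (closedBall 0 r)ᶜ, ‖h x‖ ∂μ ≤
      M * 2 ^ (finrank ℝ V + 1) / r ^ p * ∫ x, (1 + ‖x‖) ^ (-(finrank ℝ V + 1 : ℝ)) ∂μ := by
  set d := finrank ℝ V
  have hint : Integrable (fun x : V ↦ (1 + ‖x‖) ^ (-(d + 1 : ℝ))) μ :=
    integrable_one_add_norm (lt_add_one _)
  have hpointwise : ∀ x ∈ (closedBall (0 : V) r)ᶜ,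
      ‖h x‖ ≤ M * 2 ^ (d + 1) / r ^ p * (1 + ‖x‖) ^ (-(d + 1 : ℝ)) := by
    intro x hx
    have hrx : r ≤ ‖x‖ := by simpa using (not_le.mp (mt mem_closedBall_zero_iff.mpr hx)).le
    have hrpow : (1 + ‖x‖) ^ (-(d + 1 : ℝ)) = ((1 + ‖x‖) ^ (d + 1))⁻¹ := by
      rw [Real.rpow_neg (by positivity)]
      norm_cast
    rw [hrpow, ← div_eq_mul_inv, div_div, le_div_iff₀ (by positivity), mul_comm]
    calc r ^ p * (1 + ‖x‖) ^ (d + 1) * ‖h x‖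
        ≤ ‖x‖ ^ p * (2 * ‖x‖) ^ (d + 1) * ‖h x‖ := by gcongr; linarith
      _ = ‖x‖ ^ (p + (d + 1)) * ‖h x‖ * 2 ^ (d + 1) := by ring
      _ ≤ M * 2 ^ (d + 1) := by gcongr; exact hdecay x hrx
  calc ∫ x in (closedBall 0 r)ᶜ, ‖h x‖ ∂μ
      ≤ ∫ x in (closedBall 0 r)ᶜ, M * 2 ^ (d + 1) / r ^ p * (1 + ‖x‖) ^ (-(d + 1 : ℝ)) ∂μ :=
        integral_mono_of_nonneg (.of_forall fun _ ↦ norm_nonneg _) (hint.const_mul _).restrict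
          (ae_restrict_of_forall_mem measurableSet_closedBall.compl hpointwise)
    _ ≤ ∫ x, M * 2 ^ (d + 1) / r ^ p * (1 + ‖x‖) ^ (-(d + 1 : ℝ)) ∂μ :=
        setIntegral_le_integral (hint.const_mul _) (.of_forall fun _ ↦ by positivity)
    _ = M * 2 ^ (d + 1) / r ^ p * ∫ x, (1 + ‖x‖) ^ (-(d + 1 : ℝ)) ∂μ := integral_const_mul _ _

lemma pow_mul_norm_convolution_le_of_support_subset {𝕜 F G : Type*} [RCLike 𝕜] [NormedSpace 𝕜 E]
    [NormedAddCommGroup F] [NormedSpace 𝕜 F] [NormedAddCommGroup G] [NormedSpace ℝ G]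
    [NormedSpace 𝕜 G] {B : E →L[𝕜] F →L[𝕜] G} (hB : ‖B‖ ≤ 1) {k : V → E} {h : V → F}
    {r D : ℝ} {n : ℕ} (hh : Integrable h μ) (hsupp : support h ⊆ closedBall 0 r)
    (hk : ∀ x, ‖x‖ ^ n * ‖k x‖ ≤ D) {x : V} (hx : 2 * r ≤ ‖x‖) :
    ‖x‖ ^ n * ‖(k ⋆[B, μ] h) x‖ ≤ 2 ^ n * D * ∫ y, ‖h y‖ ∂μ := by
  have hpointwise : ∀ y, ‖x‖ ^ n * ‖B (k (x - y)) (h y)‖ ≤ 2 ^ n * D * ‖h y‖ := by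
    intro y
    by_cases hy : h y = 0
    · simp [hy]
    have hyr : ‖y‖ ≤ r := by simpa using hsupp hy
    have hdist : ‖x‖ ≤ 2 * ‖x - y‖ := by linarith [norm_sub_norm_le x y]
    calc ‖x‖ ^ n * ‖B (k (x - y)) (h y)‖
        ≤ (2 * ‖x - y‖) ^ n * (1 * ‖k (x - y)‖ * ‖h y‖) := by
          gcongr
          exact B.le_of_opNorm₂_le_of_le hB le_rfl le_rfl
      _ = 2 ^ n * (‖x - y‖ ^ n * ‖k (x - y)‖) * ‖h y‖ := by ring
      _ ≤ 2 ^ n * D * ‖h y‖ := by gcongr; exact hk _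
  rw [convolution_eq_swap]
  calc ‖x‖ ^ n * ‖∫ y, B (k (x - y)) (h y) ∂μ‖
      ≤ ‖x‖ ^ n * ∫ y, ‖B (k (x - y)) (h y)‖ ∂μ := by
        gcongr
        exact norm_integral_le_integral_norm _
    _ = ∫ y, ‖x‖ ^ n * ‖B (k (x - y)) (h y)‖ ∂μ := (integral_const_mul _ _).symm
    _ ≤ ∫ y, 2 ^ n * D * ‖h y‖ ∂μ :=
        integral_mono_of_nonneg (.of_forall fun _ ↦ by positivity) (hh.norm.const_mul _)
          (.of_forall hpointwise)
    _ = 2 ^ n * D * ∫ y, ‖h y‖ ∂μ := integral_const_mul _ _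

end MeasureEstimates

section Fourier

variable {V E : Type*} [NormedAddCommGroup V] [InnerProductSpace ℝ V] [FiniteDimensional ℝ V]
  [MeasurableSpace V] [BorelSpace V] [NormedAddCommGroup E] [NormedSpace ℂ E]

lemma pow_mul_norm_fourierInv_le (u : 𝓢(V, E)) (n : ℕ) (ξ : V) :
    ‖ξ‖ ^ n * ‖𝓕⁻ u ξ‖ ≤
      2 ^ n * ∑ i ∈ Finset.range (n + 1), ∫ x, ‖iteratedFDeriv ℝ i u x‖ := by
  have := Real.pow_mul_norm_iteratedFDeriv_fourier_le (K := 0) (N := ⊤) (k := 0) (n := n)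
    (u.smooth ⊤) (fun k m _ _ ↦ u.integrable_pow_mul_iteratedFDeriv volume k m) le_rfl le_top (-ξ)
  simpa [fourierInv_coe, Real.fourierInv_eq_fourier_neg, Finset.sum_product] using this

lemma fourierInv_pairing {F G : Type*} [NormedAddCommGroup F] [NormedSpace ℂ F]
    [NormedAddCommGroup G] [NormedSpace ℂ G] [CompleteSpace E] [CompleteSpace F]
    (B : E →L[ℂ] F →L[ℂ] G) (u : 𝓢(V, E)) (f : 𝓢(V, F)) :
    𝓕⁻ (pairing B u f) = SchwartzMap.convolution B (𝓕⁻ u) (𝓕⁻ f) := by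
  simp [SchwartzMap.convolution]

lemma norm_apply_le_integral_norm_fourierInv [CompleteSpace E] (g : 𝓢(V, E)) (x : V) :
    ‖g x‖ ≤ ∫ ξ, ‖𝓕⁻ g ξ‖ := by
  simpa [norm_toLp_one] using norm_fourier_apply_le_toLp_one (𝓕⁻ g) x

variable {H : Type*} [NormedAddCommGroup H] [InnerProductSpace ℂ H] [CompleteSpace H]

lemma toReal_eLpNorm_two_fourierInv (f : 𝓢(V, H)) :
    (eLpNorm (𝓕⁻ f : 𝓢(V, H)) 2 volume).toReal = (eLpNorm f 2 volume).toReal := by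
  have hplancherel := norm_fourier_toL2_eq (𝓕⁻ f)
  rw [FourierTransform.fourier_fourierInv_eq, norm_toLp, norm_toLp] at hplancherel
  exact hplancherel.symm

lemma setIntegral_closedBall_norm_fourierInv_le (f : 𝓢(V, H)) {r : ℝ} (hr : 0 ≤ r) :
    ∫ ξ in closedBall 0 r, ‖𝓕⁻ f ξ‖ ≤
      volume.real (ball (0 : V) 1) ^ (1 / 2 : ℝ) * r ^ (finrank ℝ V / 2 : ℝ) *
        (eLpNorm f 2 volume).toReal := by
  rw [← toReal_eLpNorm_two_fourierInv]
  exact setIntegral_closedBall_norm_le_eLpNorm ((𝓕⁻ f).memLp 2) hr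

lemma pow_mul_norm_fourierInv_pairing_le (u : 𝓢(V, ℂ)) (f : 𝓢(V, H)) {r D : ℝ} {n : ℕ}
    (hr : 0 ≤ r) (hf : support (𝓕⁻ f : 𝓢(V, H)) ⊆ closedBall 0 r)
    (hu : ∀ ξ, ‖ξ‖ ^ n * ‖𝓕⁻ u ξ‖ ≤ D) {ξ : V} (hξ : 2 * r ≤ ‖ξ‖) :
    ‖ξ‖ ^ n * ‖𝓕⁻ (pairing (.lsmul ℂ ℂ) u f) ξ‖ ≤
      2 ^ n * D * (volume.real (ball (0 : V) 1) ^ (1 / 2 : ℝ) * r ^ (finrank ℝ V / 2 : ℝ) *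
        (eLpNorm f 2 volume).toReal) := by
  have hD : 0 ≤ D := le_trans (by positivity) (hu 0)
  have hL1 : ∫ η, ‖𝓕⁻ f η‖ = ∫ η in closedBall 0 r, ‖𝓕⁻ f η‖ :=
    (setIntegral_eq_integral_of_forall_compl_eq_zero fun η hη ↦ by
      simpa using notMem_support.mp (Set.notMem_subset hf hη)).symm
  calc ‖ξ‖ ^ n * ‖𝓕⁻ (pairing (.lsmul ℂ ℂ) u f) ξ‖
      ≤ 2 ^ n * D * ∫ η, ‖𝓕⁻ f η‖ := by
        rw [fourierInv_pairing, convolution_apply]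
        have hB : ‖(.lsmul ℂ ℂ : ℂ →L[ℂ] H →L[ℂ] H)‖ ≤ 1 := ContinuousLinearMap.opNorm_lsmul_le
        exact pow_mul_norm_convolution_le_of_support_subset hB (𝓕⁻ f).integrable hf hu hξ
    _ ≤ _ := by
        rw [hL1]
        gcongr
        exact setIntegral_closedBall_norm_fourierInv_le f hr

lemma setIntegral_compl_closedBall_norm_fourierInv_pairing_le (u : 𝓢(V, ℂ)) (f : 𝓢(V, H))
    {r D : ℝ} {p : ℕ} (hr : 1 ≤ r) (hf : support (𝓕⁻ f : 𝓢(V, H)) ⊆ closedBall 0 r)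
    (hu : ∀ ξ, ‖ξ‖ ^ (p + (finrank ℝ V + 1)) * ‖𝓕⁻ u ξ‖ ≤ D) :
    ∫ ξ in (closedBall 0 (2 * r))ᶜ, ‖𝓕⁻ (pairing (.lsmul ℂ ℂ) u f) ξ‖ ≤
      2 ^ (p + (finrank ℝ V + 1)) * D * (volume.real (ball (0 : V) 1) ^ (1 / 2 : ℝ) *
        r ^ (finrank ℝ V / 2 : ℝ) * (eLpNorm f 2 volume).toReal) * 2 ^ (finrank ℝ V + 1) / r ^ p *
        ∫ ξ : V, (1 + ‖ξ‖) ^ (-(finrank ℝ V + 1 : ℝ)) := by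
  have hD : 0 ≤ D := le_trans (by positivity) (hu 0)
  have : 0 ≤ ∫ ξ : V, (1 + ‖ξ‖) ^ (-(finrank ℝ V + 1 : ℝ)) :=
    integral_nonneg fun _ ↦ by positivity
  refine (setIntegral_compl_closedBall_norm_le_of_pow_mul_norm_le (by linarith) (by positivity)
    fun ξ hξ ↦ pow_mul_norm_fourierInv_pairing_le u f (by positivity) hf hu hξ).trans ?_
  gcongr
  linarith

variable (V H) in
lemma exists_norm_smul_le_of_pow_mul_norm_fourierInv_le (p : ℕ) :
    ∃ K : ℝ, 0 < K ∧ ∀ (u : 𝓢(V, ℂ)) (f : 𝓢(V, H)) (r D : ℝ), 1 ≤ r →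
      support (𝓕⁻ f : 𝓢(V, H)) ⊆ closedBall 0 r →
      (∀ ξ, ‖ξ‖ ^ (p + (finrank ℝ V + 1)) * ‖𝓕⁻ u ξ‖ ≤ D) →
      ∀ x, ‖u x • f x‖ ≤ K * r ^ (finrank ℝ V / 2 : ℝ) *
        ((eLpNorm (fun y ↦ u y • f y) 2 volume).toReal +
          D / r ^ p * (eLpNorm f 2 volume).toReal) := by
  set d := finrank ℝ V
  set κ : ℝ := volume.real (ball (0 : V) 1) ^ (1 / 2 : ℝ)
  set J : ℝ := ∫ ξ : V, (1 + ‖ξ‖) ^ (-(d + 1 : ℝ))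
  obtain ⟨K, hK⟩ := exists_gt
    (max (max (κ * 2 ^ (d / 2 : ℝ)) (2 ^ (p + (d + 1)) * κ * 2 ^ (d + 1) * J)) 0)
  obtain ⟨⟨hlowK, hhighK⟩, hK0⟩ := by simpa only [max_lt_iff] using hK
  refine ⟨K, hK0, fun u f r D hr hf hu x ↦ ?_⟩
  set F := (eLpNorm f 2 volume).toReal
  set G := (eLpNorm (fun y ↦ u y • f y) 2 volume).toReal
  have hD : 0 ≤ D := le_trans (by positivity) (hu 0)
  have hlow : ∫ ξ in closedBall 0 (2 * r), ‖𝓕⁻ (pairing (.lsmul ℂ ℂ) u f) ξ‖ ≤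
      κ * (2 * r) ^ (d / 2 : ℝ) * G :=
    setIntegral_closedBall_norm_fourierInv_le (pairing (.lsmul ℂ ℂ) u f) (by positivity)
  have hhigh := setIntegral_compl_closedBall_norm_fourierInv_pairing_le u f hr hf hu
  calc ‖u x • f x‖
      ≤ ∫ ξ, ‖𝓕⁻ (pairing (.lsmul ℂ ℂ) u f) ξ‖ :=
        norm_apply_le_integral_norm_fourierInv (pairing (.lsmul ℂ ℂ) u f) x
    _ ≤ κ * (2 * r) ^ (d / 2 : ℝ) * G +
          2 ^ (p + (d + 1)) * D * (κ * r ^ (d / 2 : ℝ) * F) * 2 ^ (d + 1) / r ^ p * J := by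
        rw [← integral_add_compl measurableSet_closedBall (SchwartzMap.integrable _).norm]
        exact add_le_add hlow hhigh
    _ = κ * 2 ^ (d / 2 : ℝ) * (r ^ (d / 2 : ℝ) * G) +
          2 ^ (p + (d + 1)) * κ * 2 ^ (d + 1) * J * (r ^ (d / 2 : ℝ) * (D / r ^ p * F)) := by
        rw [Real.mul_rpow two_pos.le (by positivity)]
        ring
    _ ≤ K * (r ^ (d / 2 : ℝ) * G) + K * (r ^ (d / 2 : ℝ) * (D / r ^ p * F)) := by gcongr
    _ = K * r ^ (d / 2 : ℝ) * (G + D / r ^ p * F) := by ring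

lemma support_fourierInv_subset_closedBall {f : 𝓢(V, E)} {r : ℝ}
    (hf : support (𝓕 (f : V → E)) ⊆ closedBall 0 r) :
    support (𝓕⁻ f : 𝓢(V, E)) ⊆ closedBall 0 r := by
  intro ξ hξ
  rw [mem_support, fourierInv_coe, Real.fourierInv_eq_fourier_neg] at hξ
  simpa using hf hξ

end Fourier

section Cutoff

variable {V E : Type*} [NormedAddCommGroup V] [InnerProductSpace ℝ V] [FiniteDimensional ℝ V]

variable (V) in
lemma exists_schwartzMap_apply_zero_eq_one_norm_le_one :
    ∃ χ : 𝓢(V, ℂ), χ 0 = 1 ∧ ∀ x, ‖χ x‖ ≤ 1 := by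
  let b : ContDiffBump (0 : V) := ⟨1, 2, one_pos, one_lt_two⟩
  have hsupp : HasCompactSupport fun x ↦ (b x : ℂ) :=
    b.hasCompactSupport.comp_left Complex.ofReal_zero
  have hsmooth : ContDiff ℝ (⊤ : ℕ∞) fun x ↦ (b x : ℂ) :=
    Complex.ofRealCLM.contDiff.comp b.contDiff
  refine ⟨hsupp.toSchwartzMap hsmooth, ?_, fun x ↦ ?_⟩
  · simp [b.one_of_mem_closedBall (mem_closedBall_self b.rIn_pos.le)]
  · simp [abs_of_nonneg b.nonneg, b.le_one]

variable [MeasurableSpace V] [BorelSpace V] [NormedAddCommGroup E] [NormedSpace ℂ E]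

lemma integral_norm_iteratedFDeriv_compSubConstCLM (χ : 𝓢(V, E)) (n : ℕ) (a : V) :
    ∫ x, ‖iteratedFDeriv ℝ n (χ.compSubConstCLM ℝ a) x‖ = ∫ x, ‖iteratedFDeriv ℝ n χ x‖ := by
  have htranslate : ∀ x, iteratedFDeriv ℝ n (χ.compSubConstCLM ℝ a) x =
      iteratedFDeriv ℝ n χ (x - a) := iteratedFDeriv_comp_sub n a
  simp only [htranslate]
  exact integral_sub_right_eq_self (fun x ↦ ‖iteratedFDeriv ℝ n χ x‖) a

lemma integral_norm_iteratedFDeriv_smulLeftCLM_le {φ : V → ℂ} (hφ : φ.HasTemperateGrowth)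
    {b : ℕ → ℝ} {n : ℕ} (hb : ∀ k ≤ n, ∀ x, ‖iteratedFDeriv ℝ k φ x‖ ≤ b k) (χ : 𝓢(V, E)) :
    ∫ x, ‖iteratedFDeriv ℝ n (smulLeftCLM E φ χ) x‖ ≤
      ∑ k ∈ Finset.range (n + 1), n.choose k * b k * ∫ x, ‖iteratedFDeriv ℝ (n - k) χ x‖ := by
  have hint : ∀ m, Integrable fun x ↦ ‖iteratedFDeriv ℝ m χ x‖ := fun m ↦ by
    simpa using χ.integrable_pow_mul_iteratedFDeriv volume 0 m
  have hleibniz : ∀ x, ‖iteratedFDeriv ℝ n (smulLeftCLM E φ χ) x‖ ≤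
      ∑ k ∈ Finset.range (n + 1), n.choose k * b k * ‖iteratedFDeriv ℝ (n - k) χ x‖ := by
    intro x
    rw [smulLeftCLM_apply hφ]
    refine (norm_iteratedFDeriv_smul_le hφ.1 (χ.smooth ⊤) x (mod_cast le_top)).trans ?_
    gcongr with k hk
    exact hb k (Nat.lt_succ_iff.mp (Finset.mem_range.mp hk)) x
  calc ∫ x, ‖iteratedFDeriv ℝ n (smulLeftCLM E φ χ) x‖
      ≤ ∫ x, ∑ k ∈ Finset.range (n + 1), n.choose k * b k * ‖iteratedFDeriv ℝ (n - k) χ x‖ :=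
        integral_mono_of_nonneg (.of_forall fun _ ↦ norm_nonneg _)
          (integrable_finsetSum _ fun k _ ↦ (hint (n - k)).const_mul _) (.of_forall hleibniz)
    _ = _ := by
        rw [integral_finsetSum _ fun k _ ↦ (hint (n - k)).const_mul _]
        simp only [integral_const_mul]

lemma exists_pow_mul_norm_fourierInv_smulLeftCLM_compSubConstCLM_le (χ : 𝓢(V, E)) {c : ℕ → ℝ}
    (hc : ∀ k, 0 ≤ c k) (n : ℕ) :
    ∃ A : ℝ, 0 ≤ A ∧ ∀ (φ : V → ℂ) (b : ℝ), φ.HasTemperateGrowth →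
      (∀ k ≤ n, ∀ x, ‖iteratedFDeriv ℝ k φ x‖ ≤ c k * b) →
      ∀ a ξ, ‖ξ‖ ^ n * ‖𝓕⁻ (smulLeftCLM E φ (χ.compSubConstCLM ℝ a)) ξ‖ ≤ A * b := by
  refine ⟨2 ^ n * ∑ i ∈ Finset.range (n + 1), ∑ k ∈ Finset.range (i + 1),
    i.choose k * c k * ∫ x, ‖iteratedFDeriv ℝ (i - k) χ x‖, ?_, fun φ b hφ hb a ξ ↦ ?_⟩
  · have hL1 : ∀ m, 0 ≤ ∫ x, ‖iteratedFDeriv ℝ m χ x‖ :=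
      fun m ↦ integral_nonneg fun _ ↦ norm_nonneg _
    exact mul_nonneg (by positivity) <| Finset.sum_nonneg fun i _ ↦ Finset.sum_nonneg fun k _ ↦
      mul_nonneg (mul_nonneg (Nat.cast_nonneg _) (hc k)) (hL1 _)
  refine (pow_mul_norm_fourierInv_le _ n ξ).trans ?_
  rw [mul_assoc, Finset.sum_mul]
  gcongr with i hi
  have hin : i ≤ n := Nat.lt_succ_iff.mp (Finset.mem_range.mp hi)
  refine (integral_norm_iteratedFDeriv_smulLeftCLM_le hφ (fun k hk ↦ hb k (hk.trans hin))
    _).trans_eq ?_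
  simp only [integral_norm_iteratedFDeriv_compSubConstCLM, Finset.sum_mul]
  exact Finset.sum_congr rfl fun k _ ↦ by ring

lemma toReal_eLpNorm_smulLeftCLM_smul_le {φ : V → ℂ} (hφ : φ.HasTemperateGrowth) {χ : 𝓢(V, ℂ)}
    (hχ : ∀ x, ‖χ x‖ ≤ 1) (f : 𝓢(V, E)) (q : ℝ≥0∞) :
    (eLpNorm (fun x ↦ smulLeftCLM ℂ φ χ x • f x) q volume).toReal ≤
      (eLpNorm (fun x ↦ φ x • f x) q volume).toReal := by
  have hφf : MemLp (fun x ↦ φ x • f x) q volume := by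
    simpa only [smulLeftCLM_apply hφ] using (smulLeftCLM E φ f).memLp q
  refine ENNReal.toReal_mono hφf.eLpNorm_ne_top (eLpNorm_mono fun x ↦ ?_)
  calc ‖smulLeftCLM ℂ φ χ x • f x‖ = ‖χ x‖ * ‖φ x • f x‖ := by
        rw [smulLeftCLM_apply_apply hφ, smul_eq_mul, mul_comm, mul_smul, norm_smul]
    _ ≤ ‖φ x • f x‖ := mul_le_of_le_one_left (norm_nonneg _) (hχ x)

variable (V) in
lemma exists_norm_smul_le_of_norm_iteratedFDeriv_le (H : Type*) [NormedAddCommGroup H]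
    [InnerProductSpace ℂ H] [CompleteSpace H] {c : ℕ → ℝ} (hc : ∀ k, 0 ≤ c k) (p : ℕ) :
    ∃ K : ℝ, 0 < K ∧ ∀ (φ : V → ℂ) (f : 𝓢(V, H)) (r b : ℝ), 1 ≤ r → 0 ≤ b →
      support (𝓕⁻ f : 𝓢(V, H)) ⊆ closedBall 0 r →
      φ.HasTemperateGrowth →
      (∀ k ≤ p + (finrank ℝ V + 1), ∀ x, ‖iteratedFDeriv ℝ k φ x‖ ≤ c k * b) →
      ∀ x, ‖φ x • f x‖ ≤ K * r ^ (finrank ℝ V / 2 : ℝ) *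
        ((eLpNorm (fun y ↦ φ y • f y) 2 volume).toReal +
          b / r ^ p * (eLpNorm f 2 volume).toReal) := by
  obtain ⟨χ, hχ0, hχ1⟩ := exists_schwartzMap_apply_zero_eq_one_norm_le_one V
  obtain ⟨A, hA, hdecay⟩ := exists_pow_mul_norm_fourierInv_smulLeftCLM_compSubConstCLM_le χ hc
    (p + (finrank ℝ V + 1))
  obtain ⟨K, hK, hbound⟩ := exists_norm_smul_le_of_pow_mul_norm_fourierInv_le V H p
  refine ⟨K * (1 + A), by positivity, fun φ f r b hr hb hf hφ hφb a ↦ ?_⟩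
  set u := smulLeftCLM ℂ φ (χ.compSubConstCLM ℝ a)
  set F := (eLpNorm f 2 volume).toReal
  set G := (eLpNorm (fun y ↦ φ y • f y) 2 volume).toReal
  have hua : u a = φ a := by simp [u, smulLeftCLM_apply hφ, hχ0]
  have hG : (eLpNorm (fun y ↦ u y • f y) 2 volume).toReal ≤ G :=
    toReal_eLpNorm_smulLeftCLM_smul_le hφ (fun x ↦ hχ1 (x - a)) f 2
  calc ‖φ a • f a‖
      ≤ K * r ^ (finrank ℝ V / 2 : ℝ) *
          ((eLpNorm (fun y ↦ u y • f y) 2 volume).toReal + A * b / r ^ p * F) := by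
        rw [← hua]
        exact hbound u f r _ hr hf (hdecay φ b hφ hφb a) a
    _ ≤ K * r ^ (finrank ℝ V / 2 : ℝ) * ((1 + A) * G + (1 + A) * b / r ^ p * F) := by
        gcongr
        · exact hG.trans (le_mul_of_one_le_left (by positivity) (by linarith))
        · linarith
    _ = K * (1 + A) * r ^ (finrank ℝ V / 2 : ℝ) * (G + b / r ^ p * F) := by ring

end Cutoff

lemma exists_nat_forall_rpow_mul_div_pow_le {δ : ℝ} (hδ : δ < 1) (s t N : ℝ) :
    ∃ p : ℕ, ∀ L : ℝ, 1 ≤ L → L ^ s * (L ^ ((p + t) * δ) / L ^ p) ≤ L ^ (-N) := by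
  obtain ⟨p, hp⟩ := exists_nat_ge ((s + t * δ + N) / (1 - δ))
  refine ⟨p, fun L hL ↦ ?_⟩
  have hL0 : 0 < L := one_pos.trans_le hL
  rw [← Real.rpow_natCast L p, ← Real.rpow_sub hL0, ← Real.rpow_add hL0]
  refine Real.rpow_le_rpow_of_exponent_le hL ?_
  rw [div_le_iff₀ (by linarith)] at hp
  linarith

lemma norm_iteratedFDeriv_le_abs_mul_rpow_max {V E : Type*} [NormedAddCommGroup V]
    [NormedSpace ℝ V] [NormedAddCommGroup E] [NormedSpace ℝ E] {φ : V → E} {c : ℕ → ℝ} {L δ : ℝ}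
    (hL : 1 ≤ L) (hφ : ∀ k x, ‖iteratedFDeriv ℝ k φ x‖ ≤ c k * L ^ (k * δ)) {n k : ℕ} (hk : k ≤ n)
    (x : V) : ‖iteratedFDeriv ℝ k φ x‖ ≤ |c k| * L ^ (n * max δ 0) := by
  have hexp : k * δ ≤ n * max δ 0 :=
    calc k * δ ≤ k * max δ 0 := by gcongr; exact le_max_left _ _
      _ ≤ n * max δ 0 := by gcongr
  calc ‖iteratedFDeriv ℝ k φ x‖ ≤ c k * L ^ (k * δ) := hφ k x
    _ ≤ |c k| * L ^ (n * max δ 0) := by gcongr; exact le_abs_self _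

theorem stmt5_general {V H : Type*} [NormedAddCommGroup V] [InnerProductSpace ℝ V]
    [FiniteDimensional ℝ V] [MeasurableSpace V] [BorelSpace V] [NormedAddCommGroup H]
    [InnerProductSpace ℂ H] [CompleteSpace H] {δ : ℝ} (hδ : δ < 1) (Cm : ℕ → ℝ) (R N : ℝ) :
    ∃ C : ℝ, 0 < C ∧ ∀ L : ℝ, 1 ≤ L → ∀ (f : 𝓢(V, H)) (φ : V → ℂ),
      support (𝓕 (f : V → H)) ⊆ closedBall 0 (R * L) →
      ContDiff ℝ (⊤ : ℕ∞) φ →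
      (∀ m x, ‖iteratedFDeriv ℝ m φ x‖ ≤ Cm m * L ^ (m * δ)) →
      ∀ x, ‖φ x • f x‖ ≤ C * (L ^ (finrank ℝ V / 2 : ℝ) *
          (eLpNorm (fun y ↦ φ y • f y) 2 volume).toReal +
        L ^ (-N) * (eLpNorm f 2 volume).toReal) := by
  set d := finrank ℝ V
  obtain ⟨p, hp⟩ := exists_nat_forall_rpow_mul_div_pow_le (max_lt hδ one_pos) (d / 2) (d + 1) N
  obtain ⟨K, hK, hbound⟩ := exists_norm_smul_le_of_norm_iteratedFDeriv_le V H
    (fun k ↦ abs_nonneg (Cm k)) p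
  have hρ : 0 < max R 1 := by positivity
  set ρ := max R 1
  refine ⟨K * ρ ^ (d / 2 : ℝ), by positivity, fun L hL f φ hf hφ hφbound x ↦ ?_⟩
  have hφtemp : φ.HasTemperateGrowth := ⟨hφ, fun m ↦ ⟨0, _, by simpa using hφbound m⟩⟩
  have hband : support (𝓕⁻ f : 𝓢(V, H)) ⊆ closedBall 0 (ρ * L) :=
    support_fourierInv_subset_closedBall <|
      hf.trans (closedBall_subset_closedBall (by gcongr; exact le_max_left _ _))
  have hρL : L ≤ ρ * L := le_mul_of_one_le_left (by positivity) (le_max_right _ _)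
  have hφb : ∀ k ≤ p + (d + 1), ∀ y,
      ‖iteratedFDeriv ℝ k φ y‖ ≤ |Cm k| * L ^ ((p + (d + 1)) * max δ 0) := fun k hk y ↦ mod_cast
    norm_iteratedFDeriv_le_abs_mul_rpow_max hL hφbound hk y
  set b := L ^ ((p + (d + 1)) * max δ 0)
  set F := (eLpNorm f 2 volume).toReal
  set G := (eLpNorm (fun y ↦ φ y • f y) 2 volume).toReal
  calc ‖φ x • f x‖
      ≤ K * (ρ * L) ^ (d / 2 : ℝ) * (G + b / (ρ * L) ^ p * F) :=
        hbound φ f _ b (hL.trans hρL) (by positivity) hband hφtemp hφb x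
    _ ≤ K * (ρ * L) ^ (d / 2 : ℝ) * (G + b / L ^ p * F) := by gcongr
    _ = K * ρ ^ (d / 2 : ℝ) * (L ^ (d / 2 : ℝ) * G + L ^ (d / 2 : ℝ) * (b / L ^ p) * F) := by
        rw [Real.mul_rpow hρ.le (by positivity)]
        ring
    _ ≤ K * ρ ^ (d / 2 : ℝ) * (L ^ (d / 2 : ℝ) * G + L ^ (-N) * F) := by
        gcongr
        exact hp L hL

/-- localized Bernstein inequality: if `𝓕 f` is supported in the ball of radius
`3·2^j` and `φ` is a smooth function of "type j" (support of diameter at most 1 and `m`-th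
derivatives bounded by `C_m 2^{m j (1-ε)}`), then
`‖φ(x) f(x)‖ ≤ C (2^{3j/2} ‖φ f‖_{L²} + 2^{-Nj} ‖f‖_{L²})` for all `x`. -/
theorem stmt5 (ε : ℝ) (hε : 0 < ε) (hε1 : ε < 1) (Cm : ℕ → ℝ) (hCm : ∀ m, 0 < Cm m) :
    ∀ N : ℕ, ∃ C : ℝ, 0 < C ∧
      ∀ (j : ℕ), 1 ≤ j →
        ∀ (f : 𝓢(EuclideanSpace ℝ (Fin 3), ℂ)) (φ : EuclideanSpace ℝ (Fin 3) → ℂ),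
          Function.support (𝓕 (f : EuclideanSpace ℝ (Fin 3) → ℂ)) ⊆
            Metric.closedBall 0 (3 * 2 ^ j) →
          ContDiff ℝ (⊤ : ℕ∞) φ →
          Metric.diam (Function.support φ) ≤ 1 →
          (∀ (m : ℕ) (x : EuclideanSpace ℝ (Fin 3)),
            ‖iteratedFDeriv ℝ m φ x‖ ≤ Cm m * 2 ^ ((m : ℝ) * (j : ℝ) * (1 - ε))) →
          ∀ x : EuclideanSpace ℝ (Fin 3),
            ‖φ x * f x‖ ≤ C * (2 ^ ((3 * (j : ℝ)) / 2) *
                (eLpNorm (fun y => φ y * f y) 2 volume).toReal +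
              2 ^ (-(N : ℝ) * (j : ℝ)) *
                (eLpNorm (f : EuclideanSpace ℝ (Fin 3) → ℂ) 2 volume).toReal) := by
  intro N
  obtain ⟨C, hC, hbound⟩ := stmt5_general (V := EuclideanSpace ℝ (Fin 3)) (H := ℂ)
    (sub_lt_self 1 hε) Cm 3 N
  refine ⟨C, hC, fun j _ f φ hf hφ _ hφbound ↦ ?_⟩
  have hscale : ∀ t : ℝ, ((2 : ℝ) ^ j) ^ t = 2 ^ (t * j) := fun t ↦ by
    rw [mul_comm, Real.rpow_natCast_mul two_pos.le]
  have := hbound (2 ^ j) (one_le_pow₀ one_le_two) f φ hf hφ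
  simpa only [hscale, smul_eq_mul, finrank_euclideanSpace_fin, Nat.cast_ofNat, div_mul_eq_mul_div,
    mul_right_comm _ (1 - ε), hφbound, implies_true, forall_const] using this
end

section
/- Let α and ε be positive reals with 4α − 4 > 200ε, and let A ≥ 1. Suppose that for each j ∈ ℕ, 𝒬_j is a finite collection of axis-parallel cubes in ℝ³ of sidelength 2^{-(1-2ε)j} with #(𝒬_j) ≤ A·2^{(5-4α+100ε)j}. Then there is a constant C (depending only on α and ε) and, for each j ∈ ℕ, a collection 𝒬′_j of axis-parallel cubes of sidelength 2^{-(1-2ε)j} with #(𝒬′_j) ≤ C·A·2^{(5-4α+100ε)j}, such that: for every j and every axis-parallel cube Q of sidelength 2^{-(1-2ε)j} which intersects no element of 𝒬′_j, there exists a real number r with 1/2 < r < 1 such that for every k > j and every Q̃ ∈ 𝒬_k one has 100Q̃ ∩ ∂(rQ) = ∅. -/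
open Set

/-- The axis-parallel cube in `ℝ³` with center `c` and sidelength `s`:
`{x : ‖x - c‖_∞ ≤ s/2}` (the norm on `Fin 3 → ℝ` is the sup norm).
The dilate `rQ` of `Q = cube3 c s` is `cube3 c (r*s)`, and `∂(rQ)` is its
topological frontier. -/
def cube3 (c : Fin 3 → ℝ) (s : ℝ) : Set (Fin 3 → ℝ) := {x | ‖x - c‖ ≤ s / 2}

/-!
Call a center `q` blocked at scale `s` if every `r ∈ (1/2, 1)` is excluded by one of the cubes of
the later collections. A cube of sidelength `t` excludes a set of `r` of length `O(t / s)`, and only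
if it is close to `q`; among `s`-separated centers `q` it is close to at most `O((1 + t / s)³)`.
Integrating over `r` and summing over all these cubes therefore bounds the size of an `s`-separated
set of blocked centers by a convergent geometric series. A maximal such set serves as `𝒬′`, since
every blocked center is within `s` of it.
-/

open Metric MeasureTheory Module
open scoped NNReal

lemma exists_finite_net_of_card_separated_le {X : Type*} [PseudoMetricSpace X] {A : Set X}
    {δ N : ℝ} (hδ : 0 ≤ δ)
    (hA : ∀ S : Finset X, ↑S ⊆ A → (S : Set X).Pairwise (δ < dist · ·) → (S.card : ℝ) ≤ N) :
    ∃ T : Set X, T.Finite ∧ (T.ncard : ℝ) ≤ N ∧ ∀ x ∈ A, ∃ y ∈ T, dist x y ≤ δ := by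
  lift δ to ℝ≥0 using hδ
  have pairwise_of_isSeparated {S : Set X} (hS : IsSeparated δ S) : S.Pairwise (δ < dist · ·) :=
    hS.mono' fun x y hxy => by rwa [edist_nndist, ENNReal.coe_lt_coe] at hxy
  have packingNumber_le : packingNumber δ A ≤ (⌊N⌋₊ : ℕ∞) := by
    refine iSup₂_le fun S hSA => iSup_le fun hS => ?_
    by_contra! hcard
    obtain ⟨U, hUS, hU⟩ := exists_subset_encard_eq (Order.add_one_le_of_lt hcard)
    obtain ⟨U, rfl⟩ := (finite_of_encard_eq_coe (k := ⌊N⌋₊ + 1) hU).exists_finset_coe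
    have hUN : U.card ≤ ⌊N⌋₊ :=
      Nat.le_floor (hA U (hUS.trans hSA) (pairwise_of_isSeparated (hS.subset hUS)))
    rw [encard_coe_eq_coe_finsetCard] at hU
    norm_cast at hU
    omega
  have packingNumber_ne_top : packingNumber δ A ≠ ⊤ :=
    ne_top_of_le_ne_top (ENat.natCast_ne_top _) packingNumber_le
  obtain ⟨T, hT⟩ : ∃ T : Finset X, ↑T = maximalSeparatedSet δ A := by
    refine Set.Finite.exists_finset_coe (encard_ne_top_iff.1 ?_)
    rwa [encard_maximalSeparatedSet packingNumber_ne_top]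
  refine ⟨T, T.finite_toSet, ?_, fun x hx => ?_⟩
  · rw [ncard_coe_finset]
    refine hA T ?_ ?_ <;> rw [hT]
    · exact maximalSeparatedSet_subset
    · exact pairwise_of_isSeparated isSeparated_maximalSeparatedSet
  · have hcover := isCover_iff_subset_iUnion_closedBall.1
      (isCover_maximalSeparatedSet packingNumber_ne_top)
    rw [← hT] at hcover
    obtain ⟨y, hy, hxy⟩ := mem_iUnion₂.1 (hcover hx)
    exact ⟨y, hy, hxy⟩

section Blocked

variable {X : Type*} [PseudoMetricSpace X] {c q : X} {ρ R r : ℝ}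

lemma mem_Icc_of_not_disjoint_closedBall_sphere (hR : 0 < R)
    (h : ¬ Disjoint (closedBall c ρ) (sphere q (r * R))) :
    r ∈ Icc ((dist c q - ρ) / R) ((dist c q + ρ) / R) := by
  obtain ⟨x, hxc, hxq⟩ := not_disjoint_iff.1 h
  rw [mem_closedBall] at hxc
  rw [mem_sphere] at hxq
  have := abs_le.1 (abs_dist_sub_le x c q)
  rw [mem_Icc, div_le_iff₀ hR, le_div_iff₀ hR]
  constructor <;> linarith

lemma volume_setOf_not_disjoint_closedBall_sphere_le (hR : 0 < R) :
    volume {r | r < 1 ∧ ¬ Disjoint (closedBall c ρ) (sphere q (r * R))} ≤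
      (closedBall c (R + ρ)).indicator (fun _ => ENNReal.ofReal (2 * (ρ / R))) q := by
  by_cases hq : q ∈ closedBall c (R + ρ)
  · rw [indicator_of_mem hq]
    calc volume {r | r < 1 ∧ ¬ Disjoint (closedBall c ρ) (sphere q (r * R))}
        ≤ volume (Icc ((dist c q - ρ) / R) ((dist c q + ρ) / R)) :=
          measure_mono fun r hr => mem_Icc_of_not_disjoint_closedBall_sphere hR hr.2
      _ = ENNReal.ofReal (2 * (ρ / R)) := by
          rw [Real.volume_Icc]
          congr 1
          ring
  · rw [indicator_of_notMem hq, nonpos_iff_eq_zero]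
    suffices {r | r < 1 ∧ ¬ Disjoint (closedBall c ρ) (sphere q (r * R))} = ∅ by
      rw [this, measure_empty]
    refine eq_empty_of_forall_notMem fun r ⟨hr, hmeet⟩ => hq ?_
    have hle := (mem_Icc_of_not_disjoint_closedBall_sphere hR hmeet).1
    rw [div_le_iff₀ hR] at hle
    rw [mem_closedBall']
    linarith [mul_lt_of_lt_one_left hR hr]

/-- The points `q` for which no dilation factor `r ∈ (1/2, 1)` makes the sphere of radius `r * R`
around `q` avoid all the closed balls of centers `c i` and radii `ρ i`. -/
def blockedCenters {ι : Type*} (c : ι → X) (ρ : ι → ℝ) (R : ℝ) : Set X :=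
  {q | ∀ r ∈ Ioo (1 / 2 : ℝ) 1, ∃ i, ¬ Disjoint (closedBall (c i) (ρ i)) (sphere q (r * R))}

lemma one_half_le_tsum_of_mem_blockedCenters {ι : Type*} [Countable ι] {c : ι → X} {ρ : ι → ℝ}
    (hR : 0 < R) (hq : q ∈ blockedCenters c ρ R) :
    ENNReal.ofReal (1 / 2) ≤ ∑' i, (closedBall (c i) (R + ρ i)).indicator
      (fun _ => ENNReal.ofReal (2 * (ρ i / R))) q := by
  have hcover : Ioo (1 / 2 : ℝ) 1 ⊆
      ⋃ i, {r | r < 1 ∧ ¬ Disjoint (closedBall (c i) (ρ i)) (sphere q (r * R))} := fun r hr =>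
    have ⟨i, hi⟩ := hq r hr
    mem_iUnion.2 ⟨i, hr.2, hi⟩
  calc ENNReal.ofReal (1 / 2) = volume (Ioo (1 / 2 : ℝ) 1) := by rw [Real.volume_Ioo]; norm_num
    _ ≤ ∑' i, volume {r | r < 1 ∧ ¬ Disjoint (closedBall (c i) (ρ i)) (sphere q (r * R))} :=
        (measure_mono hcover).trans (measure_iUnion_le _)
    _ ≤ _ := ENNReal.tsum_le_tsum fun i => volume_setOf_not_disjoint_closedBall_sphere_le hR

end Blocked

/-- The amount of blocking due to a single ball in dimension `d`, where `p` is the ratio of its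
radius to that of the spheres: it excludes a set of dilation factors of length at most `2 * p` at
each of at most `(2 + p) ^ d` separated centers. -/
def blockingWeight (d : ℕ) (p : ℝ) : ℝ := 2 * p * (2 + p) ^ d

lemma blockingWeight_nonneg {p : ℝ} (hp : 0 ≤ p) (d : ℕ) : 0 ≤ blockingWeight d p := by
  unfold blockingWeight
  positivity

section Packing

variable {E : Type*} [NormedAddCommGroup E] [NormedSpace ℝ E] [FiniteDimensional ℝ E]

lemma card_le_of_separated_of_subset_closedBall {S : Finset E} {c : E} {R T : ℝ} (hR : 0 < R)
    (hT : 0 ≤ T) (hST : ↑S ⊆ closedBall c T) (hS : (S : Set E).Pairwise (2 * R ≤ dist · ·)) :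
    (S.card : ℝ) ≤ (1 + T / R) ^ finrank ℝ E := by
  borelize E
  let μ : Measure E := Measure.addHaar
  have hdisj : (S : Set E).PairwiseDisjoint (ball · R) := fun x hx y hy hxy =>
    ball_disjoint_ball (by linarith [hS hx hy hxy])
  have hsub : ⋃ x ∈ S, ball x R ⊆ ball c (T + R) :=
    iUnion₂_subset fun x hx => ball_subset_ball' (by linarith [mem_closedBall.1 (hST hx)])
  have hvol : ENNReal.ofReal (S.card * R ^ finrank ℝ E) * μ (ball 0 1) ≤
      ENNReal.ofReal ((T + R) ^ finrank ℝ E) * μ (ball 0 1) :=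
    calc ENNReal.ofReal (S.card * R ^ finrank ℝ E) * μ (ball 0 1) = μ (⋃ x ∈ S, ball x R) := by
          simp only [measure_biUnion_finset hdisj fun _ _ => measurableSet_ball,
            μ.addHaar_ball_of_pos _ hR, Finset.sum_const, nsmul_eq_mul,
            ENNReal.ofReal_mul (Nat.cast_nonneg _), ENNReal.ofReal_natCast, mul_assoc]
      _ ≤ μ (ball c (T + R)) := measure_mono hsub
      _ = _ := μ.addHaar_ball_of_pos _ (by positivity)
  have hpow : S.card * R ^ finrank ℝ E ≤ (T + R) ^ finrank ℝ E := by
    rwa [ENNReal.mul_le_mul_iff_left (measure_ball_pos _ _ one_pos).ne' measure_ball_lt_top.ne,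
      ENNReal.ofReal_le_ofReal_iff (by positivity)] at hvol
  rw [one_add_div hR.ne', div_pow, le_div_iff₀ (by positivity), add_comm R]
  exact hpow

lemma sum_indicator_closedBall_le {S : Finset E} {R ρ : ℝ} (hR : 0 < R) (hρ : 0 ≤ ρ)
    (hS : (S : Set E).Pairwise (2 * R ≤ dist · ·)) (c : E) :
    ∑ q ∈ S, (closedBall c (R + ρ)).indicator (fun _ => ENNReal.ofReal (2 * (ρ / R))) q ≤
      ENNReal.ofReal (blockingWeight (finrank ℝ E) (ρ / R)) := by
  classical
  have hcard : ((S.filter (· ∈ closedBall c (R + ρ))).card : ℝ) ≤ (2 + ρ / R) ^ finrank ℝ E := by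
    have h := card_le_of_separated_of_subset_closedBall (S := S.filter (· ∈ closedBall c (R + ρ)))
      hR (by positivity) (fun q hq => (Finset.mem_filter.1 hq).2)
      (hS.mono (Finset.filter_subset _ S))
    rwa [add_div, div_self hR.ne', ← add_assoc, one_add_one_eq_two] at h
  simp only [indicator_apply]
  rw [← Finset.sum_filter, Finset.sum_const, nsmul_eq_mul, ← ENNReal.ofReal_natCast,
    ← ENNReal.ofReal_mul (Nat.cast_nonneg _)]
  refine ENNReal.ofReal_le_ofReal ?_
  calc _ ≤ (2 + ρ / R) ^ finrank ℝ E * (2 * (ρ / R)) := by gcongr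
    _ = blockingWeight (finrank ℝ E) (ρ / R) := by unfold blockingWeight; ring

variable {ι : Type*} [Countable ι] {c : ι → E} {ρ : ι → ℝ} {R N : ℝ}

lemma card_le_of_separated_of_subset_blockedCenters {S : Finset E} (hR : 0 < R)
    (hρ : ∀ i, 0 ≤ ρ i) (hN : 0 ≤ N)
    (hw : ∑' i, ENNReal.ofReal (blockingWeight (finrank ℝ E) (ρ i / R)) ≤
      ENNReal.ofReal (N / 2))
    (hSb : ↑S ⊆ blockedCenters c ρ R) (hS : (S : Set E).Pairwise (2 * R ≤ dist · ·)) :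
    (S.card : ℝ) ≤ N := by
  have hsum : ENNReal.ofReal (S.card * (1 / 2)) ≤ ENNReal.ofReal (N / 2) :=
    calc ENNReal.ofReal (S.card * (1 / 2)) = ∑ q ∈ S, ENNReal.ofReal (1 / 2) := by
          rw [Finset.sum_const, nsmul_eq_mul, ENNReal.ofReal_mul (Nat.cast_nonneg _),
            ENNReal.ofReal_natCast]
      _ ≤ ∑ q ∈ S, ∑' i, (closedBall (c i) (R + ρ i)).indicator
            (fun _ => ENNReal.ofReal (2 * (ρ i / R))) q :=
          Finset.sum_le_sum fun q hq => one_half_le_tsum_of_mem_blockedCenters hR (hSb hq)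
      _ = ∑' i, ∑ q ∈ S, (closedBall (c i) (R + ρ i)).indicator
            (fun _ => ENNReal.ofReal (2 * (ρ i / R))) q :=
          (Summable.tsum_finsetSum fun _ _ => ENNReal.summable).symm
      _ ≤ ∑' i, ENNReal.ofReal (blockingWeight (finrank ℝ E) (ρ i / R)) :=
          ENNReal.tsum_le_tsum fun i => sum_indicator_closedBall_le hR (hρ i) hS (c i)
      _ ≤ ENNReal.ofReal (N / 2) := hw
  rw [ENNReal.ofReal_le_ofReal_iff (by positivity)] at hsum
  linarith

lemma exists_finite_net_blockedCenters (hR : 0 < R) (hρ : ∀ i, 0 ≤ ρ i) (hN : 0 ≤ N)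
    (hw : ∑' i, ENNReal.ofReal (blockingWeight (finrank ℝ E) (ρ i / R)) ≤ ENNReal.ofReal (N / 2)) :
    ∃ T : Set E, T.Finite ∧ (T.ncard : ℝ) ≤ N ∧
      ∀ q ∈ blockedCenters c ρ R, ∃ y ∈ T, dist q y ≤ 2 * R :=
  exists_finite_net_of_card_separated_le (by positivity) fun _ hSb hS =>
    card_le_of_separated_of_subset_blockedCenters hR hρ hN hw hSb (hS.mono' fun _ _ => le_of_lt)

end Packing

section GeometricScales

variable {b u L : ℝ}

lemma summable_pow_mul_blockingWeight {d : ℕ} (hb : 0 ≤ b) (hu : 0 ≤ u) (hL : 0 ≤ L)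
    (hbu : b * u < 1) (hbud : b * u ^ (d + 1) < 1) :
    Summable fun m : ℕ => b ^ m * blockingWeight d (L * u ^ m) := by
  have hlin : Summable fun m : ℕ => (b * u) ^ m :=
    summable_geometric_of_lt_one (by positivity) hbu
  have htop : Summable fun m : ℕ => (b * u ^ (d + 1)) ^ m :=
    summable_geometric_of_lt_one (by positivity) hbud
  refine Summable.of_nonneg_of_le
    (fun m => mul_nonneg (by positivity) (blockingWeight_nonneg (by positivity) d)) (fun m => ?_)
    (((hlin.mul_left (L * 2 ^ d)).add (htop.mul_left (L ^ (d + 1)))).mul_left (2 * 2 ^ (d - 1)))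
  calc b ^ m * blockingWeight d (L * u ^ m)
      ≤ b ^ m * (2 * (L * u ^ m) * (2 ^ (d - 1) * (2 ^ d + (L * u ^ m) ^ d))) := by
        unfold blockingWeight
        gcongr
        exact add_pow_le zero_le_two (by positivity) d
    _ = _ := by ring

lemma tsum_sigma_blockingWeight_le {X : Type*} {d : ℕ} (hb : 0 ≤ b) (hu : 0 < u) (hL : 0 ≤ L)
    (hsum : Summable fun m : ℕ => b ^ m * blockingWeight d (L * u ^ m)) {A : ℝ} {Q : ℕ → Set X}
    (hfin : ∀ j, (Q j).Finite) (hcard : ∀ j, ((Q j).ncard : ℝ) ≤ A * b ^ j) (j : ℕ) :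
    ∑' i : Σ m, Q (j + m),
        ENNReal.ofReal (blockingWeight d (L * (u ^ (j + i.1) / 2) / (u ^ j / 2))) ≤
      ENNReal.ofReal (A * b ^ j * ∑' m : ℕ, b ^ m * blockingWeight d (L * u ^ m)) := by
  have hAb : 0 ≤ A * b ^ j := (Nat.cast_nonneg _).trans (hcard j)
  have hw (m : ℕ) : 0 ≤ blockingWeight d (L * u ^ m) := blockingWeight_nonneg (by positivity) d
  have hratio (m : ℕ) : L * (u ^ (j + m) / 2) / (u ^ j / 2) = L * u ^ m := by
    rw [pow_add]
    field_simp
  have hlevel (m : ℕ) : ((Q (j + m)).ncard : ℝ) * blockingWeight d (L * u ^ m) ≤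
      A * b ^ j * (b ^ m * blockingWeight d (L * u ^ m)) :=
    calc ((Q (j + m)).ncard : ℝ) * blockingWeight d (L * u ^ m)
        ≤ A * b ^ (j + m) * blockingWeight d (L * u ^ m) := by
          gcongr
          exacts [hw m, hcard _]
      _ = A * b ^ j * (b ^ m * blockingWeight d (L * u ^ m)) := by ring
  simp only [hratio]
  calc ∑' i : Σ m, Q (j + m), ENNReal.ofReal (blockingWeight d (L * u ^ i.1))
      = ∑' m, ∑' _ : Q (j + m), ENNReal.ofReal (blockingWeight d (L * u ^ m)) :=
        ENNReal.tsum_sigma' _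
    _ = ∑' m, ENNReal.ofReal ((Q (j + m)).ncard * blockingWeight d (L * u ^ m)) := by
        refine tsum_congr fun m => ?_
        rw [ENNReal.tsum_set_const, ← (hfin (j + m)).cast_ncard_eq, ENat.toENNReal_coe,
          ENNReal.ofReal_mul (Nat.cast_nonneg _), ENNReal.ofReal_natCast]
    _ ≤ ∑' m, ENNReal.ofReal (A * b ^ j * (b ^ m * blockingWeight d (L * u ^ m))) :=
        ENNReal.tsum_le_tsum fun m => ENNReal.ofReal_le_ofReal (hlevel m)
    _ = ENNReal.ofReal (A * b ^ j * ∑' m : ℕ, b ^ m * blockingWeight d (L * u ^ m)) := by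
        rw [← tsum_mul_left, ENNReal.ofReal_tsum_of_nonneg _ (hsum.mul_left _)]
        intro m
        have := hw m
        positivity

end GeometricScales

lemma mem_blockedCenters_sigma {X : Type*} [PseudoMetricSpace X] {Q : ℕ → Set X} {t : ℕ → ℝ}
    {j : ℕ} {R : ℝ} {q : X} :
    q ∈ blockedCenters (fun i : Σ m, Q (j + m) => (i.2 : X)) (fun i => t (j + i.1)) R ↔
      ∀ r ∈ Ioo (1 / 2 : ℝ) 1, ∃ k, j ≤ k ∧ ∃ c ∈ Q k,
        ¬ Disjoint (closedBall c (t k)) (sphere q (r * R)) := by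
  refine forall₂_congr fun r _ => ⟨fun ⟨⟨m, c⟩, h⟩ => ⟨j + m, by omega, c, c.2, h⟩, ?_⟩
  rintro ⟨k, hk, c, hc, h⟩
  obtain ⟨m, rfl⟩ := Nat.exists_eq_add_of_le hk
  exact ⟨⟨m, c, hc⟩, h⟩

theorem stmt8_general {E : Type*} [NormedAddCommGroup E] [NormedSpace ℝ E] [FiniteDimensional ℝ E]
    {b u L : ℝ} (hb : 0 ≤ b) (hu : 0 < u) (hL : 0 ≤ L) (hbu : b * u < 1)
    (hbud : b * u ^ (finrank ℝ E + 1) < 1) :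
    ∃ C : ℝ, 0 < C ∧ ∀ (A : ℝ) (Q : ℕ → Set E), (∀ j, (Q j).Finite) →
      (∀ j, ((Q j).ncard : ℝ) ≤ A * b ^ j) →
      ∃ Q' : ℕ → Set E, (∀ j, (Q' j).Finite ∧ ((Q' j).ncard : ℝ) ≤ C * A * b ^ j) ∧
        ∀ j q, (∀ c ∈ Q' j, Disjoint (closedBall q (u ^ j / 2)) (closedBall c (u ^ j / 2))) →
          ∃ r : ℝ, 1 / 2 < r ∧ r < 1 ∧ ∀ k, j ≤ k → ∀ c ∈ Q k,
            Disjoint (closedBall c (L * (u ^ k / 2))) (sphere q (r * (u ^ j / 2))) := by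
  set w : ℕ → ℝ := fun m => b ^ m * blockingWeight (finrank ℝ E) (L * u ^ m)
  have hw : Summable w := summable_pow_mul_blockingWeight hb hu.le hL hbu hbud
  have hw0 : 0 ≤ ∑' m, w m :=
    tsum_nonneg fun m => mul_nonneg (by positivity) (blockingWeight_nonneg (by positivity) _)
  refine ⟨2 * ∑' m, w m + 1, by positivity, fun A Q hfin hcard => ?_⟩
  have hA (j : ℕ) : 0 ≤ A * b ^ j := (Nat.cast_nonneg _).trans (hcard j)
  let blocked (j : ℕ) : Set E := blockedCenters (fun i : Σ m, Q (j + m) => (i.2 : E))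
    (fun i => L * (u ^ (j + i.1) / 2)) (u ^ j / 2)
  have exists_net (j : ℕ) : ∃ T : Set E, T.Finite ∧
      (T.ncard : ℝ) ≤ (2 * ∑' m, w m + 1) * A * b ^ j ∧
      ∀ q ∈ blocked j, ∃ c ∈ T, dist q c ≤ 2 * (u ^ j / 2) := by
    have (m : ℕ) : Finite (Q (j + m)) := hfin _
    have hAj := hA j
    refine exists_finite_net_blockedCenters (by positivity) (fun i => by positivity)
      (by rw [mul_assoc]; positivity)
      ((tsum_sigma_blockingWeight_le hb hu hL hw hfin hcard j).trans ?_)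
    exact ENNReal.ofReal_le_ofReal (by linarith)
  choose Q' hQ'fin hQ'card hQ' using exists_net
  refine ⟨Q', fun j => ⟨hQ'fin j, hQ'card j⟩, fun j q hq => ?_⟩
  have hq_notMem : q ∉ blocked j := fun hmem => by
    obtain ⟨c, hc, hqc⟩ := hQ' j q hmem
    have := (disjoint_closedBall_closedBall_iff (by positivity) (by positivity)).1 (hq c hc)
    linarith
  simpa [blocked, mem_blockedCenters_sigma (t := fun k => L * (u ^ k / 2)), and_assoc]
    using hq_notMem

lemma two_rpow_mul_two_rpow_pow_lt_one {x y : ℝ} {n : ℕ} (h : x + y * n < 0) :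
    (2 : ℝ) ^ x * ((2 : ℝ) ^ y) ^ n < 1 := by
  rw [← Real.rpow_mul_natCast zero_le_two, ← Real.rpow_add two_pos]
  exact Real.rpow_lt_one_of_one_lt_of_neg one_lt_two h

lemma cube3_eq_closedBall (c : Fin 3 → ℝ) (s : ℝ) : cube3 c s = closedBall c (s / 2) := by
  ext x
  rw [mem_closedBall_iff_norm]
  rfl

/-- Theorem `nopaths`: let `4α - 4 > 200ε` with `α, ε > 0`. There is a constant
`C` (depending only on `α` and `ε`) such that whenever `A ≥ 1` and, for each `j`, `𝒬 j` is a
finite collection of axis-parallel cubes of sidelength `2^{-(1-2ε)j}` (recorded by their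
centers) with `#𝒬_j ≤ A·2^{(5-4α+100ε)j}`, there exist collections `𝒬′ j` of cubes of
sidelength `2^{-(1-2ε)j}` with `#𝒬′_j ≤ C·A·2^{(5-4α+100ε)j}` such that: for every `j` and
every cube `Q` of sidelength `2^{-(1-2ε)j}` intersecting no element of `𝒬′ j`, there is
`1/2 < r < 1` such that for every `k > j` and every `Q̃ ∈ 𝒬 k`,
`100·Q̃ ∩ ∂(rQ) = ∅`. -/
theorem stmt8 (α ε : ℝ) (hα : 0 < α) (hε : 0 < ε) (h : 4 * α - 4 > 200 * ε) :
    ∃ C : ℝ, 0 < C ∧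
      ∀ (A : ℝ), 1 ≤ A →
        ∀ (Q : ℕ → Set (Fin 3 → ℝ)),
          (∀ j, (Q j).Finite) →
          (∀ j, ((Q j).ncard : ℝ) ≤ A * 2 ^ ((5 - 4 * α + 100 * ε) * (j : ℝ))) →
          ∃ Q' : ℕ → Set (Fin 3 → ℝ),
            (∀ j, (Q' j).Finite ∧
              ((Q' j).ncard : ℝ) ≤ C * A * 2 ^ ((5 - 4 * α + 100 * ε) * (j : ℝ))) ∧
            ∀ (j : ℕ) (q : Fin 3 → ℝ),
              (∀ c ∈ Q' j,
                cube3 q ((2 : ℝ) ^ (-(1 - 2 * ε) * (j : ℝ))) ∩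
                  cube3 c ((2 : ℝ) ^ (-(1 - 2 * ε) * (j : ℝ))) = ∅) →
              ∃ r : ℝ, 1 / 2 < r ∧ r < 1 ∧
                ∀ (k : ℕ), j < k → ∀ c ∈ Q k,
                  cube3 c (100 * (2 : ℝ) ^ (-(1 - 2 * ε) * (k : ℝ))) ∩
                    frontier (cube3 q (r * (2 : ℝ) ^ (-(1 - 2 * ε) * (j : ℝ)))) = ∅ := by
  have hlin : (2 : ℝ) ^ (5 - 4 * α + 100 * ε) * 2 ^ (-(1 - 2 * ε)) < 1 := by
    simpa using two_rpow_mul_two_rpow_pow_lt_one (n := 1) (x := 5 - 4 * α + 100 * ε)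
      (y := -(1 - 2 * ε)) (by push_cast; linarith)
  have htop : (2 : ℝ) ^ (5 - 4 * α + 100 * ε) *
      (2 ^ (-(1 - 2 * ε))) ^ (finrank ℝ (Fin 3 → ℝ) + 1) < 1 :=
    two_rpow_mul_two_rpow_pow_lt_one (by rw [finrank_fin_fun]; push_cast; linarith)
  obtain ⟨C, hC, H⟩ := stmt8_general (L := 100) (by positivity) (by positivity) (by norm_num)
    hlin htop
  simp only [cube3_eq_closedBall, frontier_closedBall', ← disjoint_iff_inter_eq_empty,
    Real.rpow_mul_natCast zero_le_two, mul_div_assoc]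
  refine ⟨C, hC, fun A _ Q hfin hcard => ?_⟩
  obtain ⟨Q', hQ', hr⟩ := H A Q hfin hcard
  refine ⟨Q', hQ', fun j q hq => ?_⟩
  obtain ⟨r, hr_gt, hr_lt, hdisj⟩ := hr j q hq
  exact ⟨r, hr_gt, hr_lt, fun k hjk => hdisj k hjk.le⟩
end

section
/- Let θ ∈ (0,1], M ≥ 0, L ∈ ℕ with L ≥ 1, and let ν be a real number with ν ≥ θ^L · M. Let a_1, a_2, …, a_{L+1} be real numbers with 0 ≤ a_l ≤ M for every l. Then there exists an index l with 1 ≤ l ≤ L such that a_l + ν ≥ θ · a_{l+1}. -/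
/-! Weight the differences `θ * a (l + 1) - a l` by `θ ^ (l - 1)`. The weighted sum telescopes to
`θ ^ L * a (L + 1) - a 1 ≤ θ ^ L * M ≤ ν`, while the weights add up to at least `1`; so the
differences cannot all exceed `ν`. -/

section WeightedPigeonhole

open Finset

theorem one_le_geom_sum {S : Type*} [Semiring S] [PartialOrder S] [IsOrderedRing S] {θ : S} {n : ℕ}
    (hθ : 0 ≤ θ) (hn : n ≠ 0) : 1 ≤ ∑ i ∈ range n, θ ^ i := by
  simpa only [pow_zero] using
    single_le_sum (fun i _ ↦ pow_nonneg hθ i) (mem_range.mpr (Nat.pos_of_ne_zero hn))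

variable {R : Type*} [Ring R]

theorem sum_range_pow_mul_mul_succ_sub (θ : R) (a : ℕ → R) (n : ℕ) :
    ∑ i ∈ range n, θ ^ i * (θ * a (i + 1) - a i) = θ ^ n * a n - a 0 := by
  simpa only [mul_sub, ← mul_assoc, ← pow_succ, pow_zero, one_mul] using
    sum_range_sub (fun i ↦ θ ^ i * a i) n

variable [LinearOrder R] [IsStrictOrderedRing R] {θ : R}

theorem exists_mul_succ_le_add_of_pow_mul_le {ν : R} {a : ℕ → R} {n : ℕ} (hθ : 0 < θ) (hn : n ≠ 0)
    (h : θ ^ n * a n ≤ a 0 + (∑ i ∈ range n, θ ^ i) * ν) :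
    ∃ i < n, θ * a (i + 1) ≤ a i + ν := by
  have sum_le : ∑ i ∈ range n, θ ^ i * (θ * a (i + 1) - a i) ≤ ∑ i ∈ range n, θ ^ i * ν := by
    rwa [sum_range_pow_mul_mul_succ_sub, ← sum_mul, sub_le_iff_le_add']
  obtain ⟨i, hi, hle⟩ := exists_le_of_sum_le (nonempty_range_iff.mpr hn) sum_le
  exact ⟨i, mem_range.mp hi,
    sub_le_iff_le_add'.mp (le_of_mul_le_mul_left hle (pow_pos hθ i))⟩

theorem stmt11_general {M ν : R} {L : ℕ} (hθ : 0 < θ) (hM : 0 ≤ M) (hL : 1 ≤ L)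
    (hν : θ ^ L * M ≤ ν) {a : ℕ → R} (ha_first : 0 ≤ a 1) (ha_last : a (L + 1) ≤ M) :
    ∃ l, 1 ≤ l ∧ l ≤ L ∧ θ * a (l + 1) ≤ a l + ν := by
  have hL0 : L ≠ 0 := Nat.one_le_iff_ne_zero.mp hL
  have hν0 : 0 ≤ ν := (mul_nonneg (pow_nonneg hθ.le L) hM).trans hν
  have pow_mul_le : θ ^ L * a (L + 1) ≤ a 1 + (∑ i ∈ range L, θ ^ i) * ν :=
    calc θ ^ L * a (L + 1)
      _ ≤ θ ^ L * M := mul_le_mul_of_nonneg_left ha_last (pow_nonneg hθ.le L)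
      _ ≤ ν := hν
      _ ≤ (∑ i ∈ range L, θ ^ i) * ν := le_mul_of_one_le_left hν0 (one_le_geom_sum hθ.le hL0)
      _ ≤ a 1 + (∑ i ∈ range L, θ ^ i) * ν := le_add_of_nonneg_left ha_first
  obtain ⟨i, hi, hle⟩ :=
    exists_mul_succ_le_add_of_pow_mul_le (a := fun i ↦ a (i + 1)) hθ hL0 pow_mul_le
  exact ⟨i + 1, Nat.le_add_left 1 i, hi, hle⟩

end WeightedPigeonhole

/-- abstract pigeonhole behind Lemma 6.3: let `θ ∈ (0,1]`, `M ≥ 0`, `L ≥ 1`,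
and `ν ≥ θ^L · M`. If `0 ≤ a l ≤ M` for `1 ≤ l ≤ L+1`, then there is `1 ≤ l ≤ L` with
`a l + ν ≥ θ · a (l+1)`. -/
theorem stmt11 (θ M ν : ℝ) (L : ℕ) (hθ : 0 < θ) (hθ1 : θ ≤ 1) (hM : 0 ≤ M) (hL : 1 ≤ L)
    (hν : θ ^ L * M ≤ ν) (a : ℕ → ℝ)
    (ha : ∀ l, 1 ≤ l → l ≤ L + 1 → 0 ≤ a l ∧ a l ≤ M) :
    ∃ l, 1 ≤ l ∧ l ≤ L ∧ θ * a (l + 1) ≤ a l + ν :=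
  stmt11_general hθ hM hL hν (ha 1 le_rfl (Nat.le_add_left 1 L)).1
    (ha (L + 1) (Nat.le_add_left 1 L) le_rfl).2
end

section
/- Let F ⊂ D be a finite set of dyadic cubes and let u : ℝ → (D → ℝ) be such that u_Q(t) = 0 for all t whenever Q ∉ F, each function t ↦ u_Q(t) is differentiable, and u satisfies the dyadic Euler equation d u_Q/dt = −c(u(t),u(t))_Q for every Q ∈ D and every t ∈ ℝ. Then the energy t ↦ Σ_{Q∈D} u_Q(t)² is constant in t. -/
/-- A dyadic cube of `ℝ³` is encoded by its level `j ∈ ℤ` and its lattice position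
`k ∈ ℤ³`: it is the cube `2^{-j}(k + [0,1]³)`, of sidelength `2^{-j}`. -/
abbrev DCube : Type := ℤ × (Fin 3 → ℤ)

/-- The level `j(Q)` of a dyadic cube. -/
def DCube.level (Q : DCube) : ℤ := Q.1

/-- `IsChild Q' Q` : the dyadic cube `Q'` is one of the `8` dyadic children of `Q`,
i.e. `Q'` has level `j(Q)+1` and `2^{-(j+1)}(k' + [0,1]³) ⊆ 2^{-j}(k + [0,1]³)`. -/
def IsChild (Q' Q : DCube) : Prop :=
  Q'.1 = Q.1 + 1 ∧ ∀ i, Q'.2 i = 2 * Q.2 i ∨ Q'.2 i = 2 * Q.2 i + 1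

/-- `IsCascade Q Q' Q''` : `Q'` is a dyadic child of `Q` and `Q''` is a dyadic child
of `Q'`. -/
def IsCascade (Q Q' Q'' : DCube) : Prop := IsChild Q' Q ∧ IsChild Q'' Q'

open Classical in
/-- The cascade-down operator:
`c_d(u,v)_R = Σ_{cascades (Q,Q′,Q″), Q″ = R} 2^{(5/2)j(Q)} u_Q v_{Q′}`. -/
noncomputable def cascadeDown (u v : DCube → ℝ) (R : DCube) : ℝ :=
  ∑ᶠ p : DCube × DCube,
    if IsCascade p.1 p.2 R then 2 ^ ((5 / 2 : ℝ) * (p.1.level : ℝ)) * u p.1 * v p.2 else 0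

open Classical in
/-- The cascade-up operator:
`c_u(u,v)_R = Σ_{cascades (Q,Q′,Q″), Q = R} 2^{(5/2)j(Q)} u_{Q″} v_{Q′}`. -/
noncomputable def cascadeUp (u v : DCube → ℝ) (R : DCube) : ℝ :=
  ∑ᶠ p : DCube × DCube,
    if IsCascade R p.1 p.2 then 2 ^ ((5 / 2 : ℝ) * (R.level : ℝ)) * u p.2 * v p.1 else 0

/-- `c(u,v) = c_d(u,v) − c_u(u,v)`. -/
noncomputable def cascade (u v : DCube → ℝ) : DCube → ℝ :=
  fun R => cascadeDown u v R - cascadeUp u v R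

/-! The coupling `2^{(5/2)j(Q)} u_Q v_{Q'} w_{Q''}` of a cascade `(Q, Q', Q'')` enters both
`⟨c_d(u,v), w⟩`, where the triple is grouped by its last cube, and `⟨u, c_u(w,v)⟩`, where it is
grouped by its first. Parents are unique, so only finitely many cascades end in the support of `w`
and the two sums agree: `c_d(·,v)` and `c_u(·,v)` are adjoint. Hence `⟨u, c(u,v)⟩ = 0` for every
`v`, and differentiating the energy `⟨u, u⟩` along the flow gives `-2⟨u, c(u,v)⟩ = 0`. -/

theorem locallyFinite_support_of_finite {ι X M : Type*} [TopologicalSpace X] [Zero M]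
    {f : X → ι → M} {F : Set ι} (hF : F.Finite) (hf : ∀ x, ∀ i ∉ F, f x i = 0) :
    LocallyFinite fun i => Function.support fun x => f x i :=
  fun _ => ⟨Set.univ, Filter.univ_mem, hF.subset fun i ⟨x, hx, _⟩ =>
    not_imp_comm.1 (hf x i) hx⟩

section FinsumDeriv

open Function Topology

variable {ι 𝕜 E : Type*} [NontriviallyNormedField 𝕜] [NormedAddCommGroup E] [NormedSpace 𝕜 E]

theorem hasDerivAt_finsum {f : ι → 𝕜 → E} {f' : ι → E} {x : 𝕜}
    (lf : LocallyFinite fun i => support (f i)) (hf : ∀ i, HasDerivAt (f i) (f' i) x) :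
    HasDerivAt (fun y => ∑ᶠ i, f i y) (∑ᶠ i, f' i) x := by
  obtain ⟨I, hI⟩ := lf.exists_finset_support x
  have f'_eq_zero {i : ι} (hi : i ∉ I) : f' i = 0 :=
    (hf i).unique <| (hasDerivAt_const x 0).congr_of_eventuallyEq <|
      hI.mono fun y hy => by_contra fun hne => hi (hy hne)
  have finsum_eq_sum : (fun y => ∑ᶠ i, f i y) =ᶠ[𝓝 x] fun y => ∑ i ∈ I, f i y :=
    hI.mono fun y hy => finsum_eq_sum_of_support_subset _ hy
  rw [finsum_eq_sum_of_support_subset f' fun i hi => by_contra fun h => hi (f'_eq_zero h)]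
  exact (HasDerivAt.fun_sum fun i _ => hf i).congr_of_eventuallyEq finsum_eq_sum

end FinsumDeriv

theorem IsChild.parent_unique {P Q R : DCube} (hP : IsChild R P) (hQ : IsChild R Q) : P = Q := by
  refine Prod.ext (add_right_cancel (hP.1.symm.trans hQ.1)) (funext fun i => ?_)
  have hPi := hP.2 i
  have hQi := hQ.2 i
  omega

open Classical in
/-- The contribution `2^{(5/2)j(Q)} u_Q v_{Q'} w_{Q''}` of a triple of cubes to the trilinear form
`⟨c_d(u,v), w⟩ = ⟨u, c_u(w,v)⟩`; it is `0` when the triple `(Q, Q', Q'')` is not a cascade. -/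
noncomputable def cascadeTerm (u v w : DCube → ℝ) (p : DCube × DCube × DCube) : ℝ :=
  if IsCascade p.1 p.2.1 p.2.2 then
    2 ^ ((5 / 2 : ℝ) * (p.1.level : ℝ)) * u p.1 * v p.2.1 * w p.2.2
  else 0

section EnergyBalance

open Function

theorem hasFiniteSupport_cascadeTerm (u v : DCube → ℝ) {w : DCube → ℝ} (hw : HasFiniteSupport w) :
    HasFiniteSupport (cascadeTerm u v w) := by
  have cascade_of_mem : ∀ p ∈ support (cascadeTerm u v w), IsCascade p.1 p.2.1 p.2.2 :=
    fun p hp => by_contra fun h => hp (if_neg h)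
  refine Set.Finite.of_injOn (f := fun p => p.2.2) (t := support w) (fun p hp hwp => hp ?_) ?_ hw
  · simp [cascadeTerm, hwp]
  · rintro ⟨P, P', R⟩ hP ⟨Q, Q', _⟩ hQ rfl
    obtain ⟨hP₁, hP₂⟩ := cascade_of_mem _ hP
    obtain ⟨hQ₁, hQ₂⟩ := cascade_of_mem _ hQ
    obtain rfl := hP₂.parent_unique hQ₂
    obtain rfl := hP₁.parent_unique hQ₁
    rfl

theorem mul_cascadeUp_eq_finsum_cascadeTerm (u v w : DCube → ℝ) (R : DCube) :
    u R * cascadeUp w v R = ∑ᶠ p, cascadeTerm u v w (R, p) := by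
  rw [cascadeUp, mul_finsum]
  refine finsum_congr fun p => ?_
  rw [cascadeTerm, mul_ite, mul_zero]
  congr 1
  ring

theorem mul_cascadeDown_eq_finsum_cascadeTerm (u v w : DCube → ℝ) (R : DCube) :
    w R * cascadeDown u v R = ∑ᶠ p : DCube × DCube, cascadeTerm u v w (p.1, p.2, R) := by
  rw [cascadeDown, mul_finsum]
  refine finsum_congr fun p => ?_
  rw [cascadeTerm, mul_ite, mul_zero]
  congr 1
  ring

theorem finsum_mul_cascadeDown_eq_finsum_mul_cascadeUp (u v : DCube → ℝ) {w : DCube → ℝ}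
    (hw : HasFiniteSupport w) :
    ∑ᶠ R, w R * cascadeDown u v R = ∑ᶠ R, u R * cascadeUp w v R := by
  let rotate : DCube × DCube × DCube ≃ DCube × DCube × DCube :=
    (Equiv.prodComm _ _).trans (Equiv.prodAssoc _ _ _)
  have hfin := hasFiniteSupport_cascadeTerm u v hw
  calc ∑ᶠ R, w R * cascadeDown u v R
      = ∑ᶠ (R) (p : DCube × DCube), cascadeTerm u v w (rotate (R, p)) :=
        finsum_congr (mul_cascadeDown_eq_finsum_cascadeTerm u v w)
    _ = ∑ᶠ q, cascadeTerm u v w (rotate q) :=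
        (finsum_curry _ (hfin.preimage rotate.injective.injOn)).symm
    _ = ∑ᶠ q, cascadeTerm u v w q := finsum_comp_equiv rotate
    _ = ∑ᶠ (R) (p : DCube × DCube), cascadeTerm u v w (R, p) := finsum_curry _ hfin
    _ = ∑ᶠ R, u R * cascadeUp w v R :=
        (finsum_congr (mul_cascadeUp_eq_finsum_cascadeTerm u v w)).symm

theorem finsum_mul_cascade_self_eq_zero {u : DCube → ℝ} (hu : HasFiniteSupport u)
    (v : DCube → ℝ) : ∑ᶠ R, u R * cascade u v R = 0 := by
  have hmul (g : DCube → ℝ) : HasFiniteSupport fun R => u R * g R :=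
    hu.subset (support_mul_subset_left u g)
  simp only [cascade, mul_sub]
  rw [finsum_sub_distrib (hmul _) (hmul _), finsum_mul_cascadeDown_eq_finsum_mul_cascadeUp u v hu,
    sub_self]

theorem hasDerivAt_finsum_sq_of_cascade {u : ℝ → DCube → ℝ} {v : DCube → ℝ} {t : ℝ}
    (lf : LocallyFinite fun Q => support fun s => u s Q)
    (hode : ∀ Q, HasDerivAt (fun s => u s Q) (-(cascade (u t) v Q)) t) :
    HasDerivAt (fun s => ∑ᶠ Q, u s Q ^ 2) 0 t := by
  have lf_sq : LocallyFinite fun Q => support fun s => u s Q ^ 2 :=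
    lf.subset fun Q s hs hus => hs (by simp [hus])
  have hderiv_sq (Q : DCube) :
      HasDerivAt (fun s => u s Q ^ 2) (-2 * (u t Q * cascade (u t) v Q)) t :=
    ((hode Q).fun_pow 2).congr_deriv (by push_cast; ring)
  refine (hasDerivAt_finsum lf_sq hderiv_sq).congr_deriv ?_
  rw [← mul_finsum, finsum_mul_cascade_self_eq_zero (lf.point_finite t), mul_zero]

end EnergyBalance

theorem stmt13_general (u v : ℝ → DCube → ℝ)
    (lf : LocallyFinite fun Q => Function.support fun t => u t Q)
    (hode : ∀ (Q : DCube) (t : ℝ),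
      HasDerivAt (fun s => u s Q) (-(cascade (u t) (v t) Q)) t) :
    ∀ t₁ t₂ : ℝ, ∑ᶠ Q : DCube, (u t₁ Q) ^ 2 = ∑ᶠ Q : DCube, (u t₂ Q) ^ 2 := by
  have hE (t : ℝ) : HasDerivAt (fun s => ∑ᶠ Q, u s Q ^ 2) 0 t :=
    hasDerivAt_finsum_sq_of_cascade lf fun Q => hode Q t
  exact is_const_of_deriv_eq_zero (fun t => (hE t).differentiableAt) fun t => (hE t).deriv

/-- if `u : ℝ → (D → ℝ)` is supported (in the cube variable) in a fixed finite
set `F` of dyadic cubes, each `t ↦ u_Q(t)` is differentiable and satisfies the dyadic Euler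
equation `d u_Q/dt = −c(u,u)_Q`, then the energy `Σ_Q u_Q(t)²` is constant in `t`. -/
theorem stmt13 (F : Set DCube) (hF : F.Finite) (u : ℝ → DCube → ℝ)
    (hsupp : ∀ t, ∀ Q, Q ∉ F → u t Q = 0)
    (hode : ∀ (Q : DCube) (t : ℝ),
      HasDerivAt (fun s => u s Q) (-(cascade (u t) (u t) Q)) t) :
    ∀ t₁ t₂ : ℝ, ∑ᶠ Q : DCube, (u t₁ Q) ^ 2 = ∑ᶠ Q : DCube, (u t₂ Q) ^ 2 :=
  stmt13_general u u (locallyFinite_support_of_finite hF hsupp) hode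
end
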